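/- arXiv:2211.01661 — 7 statements merged into one kernel-verified Lean document; each statement's English description precedes it below -/
import Mathlib

section
/- For every even integer n ≥ 4, the space Ω_n of n×n real symmetric hollow matrices is spanned by the pairing matrices together with the first n−1 adjacent set matrices: every C ∈ Ω_n can be written as a linear combination of matrices from 𝕊(n) ∪ {R_1, …, R_{n−1}}; i.e., span{S : S ∈ 𝕊(n)} + span{R_i : 1 ≤ i ≤ n−1} = Ω_n. -/
open Finset

def hollowSym {n : ℕ} (C : Matrix (Fin n) (Fin n) ℝ) : Prop :=
  C.IsSymm ∧ ∀ i, C i i = 0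

noncomputable def innerH {n : ℕ} (X C : Matrix (Fin n) (Fin n) ℝ) : ℝ :=
  (1 / 2) * ∑ i, ∑ j, X i j * C i j

noncomputable def adjR {n : ℕ} (i : Fin n) : Matrix (Fin n) (Fin n) ℝ :=
  Matrix.of fun k l => if k ≠ l ∧ (i = k ∨ i = l) then 1 else 0

def IsPairing {n : ℕ} (S : Matrix (Fin n) (Fin n) ℝ) : Prop :=
  S.IsSymm ∧ (∀ i, S i i = 0) ∧ (∀ i j, S i j = 0 ∨ S i j = 1) ∧ (∀ i, ∑ j, S i j = 1)

noncomputable def pairings (n : ℕ) : Finset (Matrix (Fin n) (Fin n) ℝ) :=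
  (Finset.univ.filter (fun σ : Equiv.Perm (Fin n) => ∀ i, σ i ≠ i ∧ σ (σ i) = i)).image
    (fun σ => Matrix.of fun i j => if σ i = j then (1 : ℝ) else 0)

noncomputable def pairSum {n : ℕ} (C : Matrix (Fin n) (Fin n) ℝ) : ℝ :=
  ∑ i, ∑ j ∈ Finset.univ.filter (fun j => i < j), C i j

noncomputable def muEl {n : ℕ} (C : Matrix (Fin n) (Fin n) ℝ) : ℝ :=
  (2 / ((n : ℝ) * ((n : ℝ) - 1))) * pairSum C

noncomputable def Jmat (n : ℕ) : Matrix (Fin n) (Fin n) ℝ := Matrix.of fun _ _ => 1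

noncomputable def muSum (n : ℕ) (C : Matrix (Fin n) (Fin n) ℝ) : ℝ :=
  (1 / (Nat.doubleFactorial (n - 1) : ℝ)) * ∑ S ∈ pairings n, innerH S C

noncomputable def sig2El {n : ℕ} (C : Matrix (Fin n) (Fin n) ℝ) : ℝ :=
  (2 / ((n : ℝ) * ((n : ℝ) - 1))) *
    ∑ i, ∑ j ∈ Finset.univ.filter (fun j => i < j), (C i j - muEl C) ^ 2

noncomputable def sig2Sum (n : ℕ) (C : Matrix (Fin n) (Fin n) ℝ) : ℝ :=
  (1 / (Nat.doubleFactorial (n - 1) : ℝ)) *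
    ∑ S ∈ pairings n, (innerH S C - muSum n C) ^ 2

def Omega (n : ℕ) : Submodule ℝ (Matrix (Fin n) (Fin n) ℝ) where
  carrier := {C | C.IsSymm ∧ ∀ i, C i i = 0}
  add_mem' := by
    rintro A B ⟨hA1, hA2⟩ ⟨hB1, hB2⟩
    refine ⟨?_, fun i => ?_⟩
    · unfold Matrix.IsSymm at *
      rw [Matrix.transpose_add, hA1, hB1]
    · simp [Matrix.add_apply, hA2 i, hB2 i]
  zero_mem' := by
    refine ⟨?_, fun i => rfl⟩
    unfold Matrix.IsSymm
    exact Matrix.transpose_zero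
  smul_mem' := by
    rintro c A ⟨hA1, hA2⟩
    refine ⟨?_, fun i => ?_⟩
    · unfold Matrix.IsSymm at *
      rw [Matrix.transpose_smul, hA1]
    · simp [Matrix.smul_apply, hA2 i]


theorem aux_four {n : ℕ} (x : Fin n → Fin n → ℝ) (hsym : ∀ a b, x a b = x b a)
    (hS : ∀ σ : Equiv.Perm (Fin n), (∀ i, σ i ≠ i ∧ σ (σ i) = i) → ∑ i, x i (σ i) = 0)
    (he : Even n) (a b c d : Fin n) (hab : a ≠ b) (hac : a ≠ c) (had : a ≠ d)
    (hbc : b ≠ c) (hbd : b ≠ d) (hcd : c ≠ d) :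
    x a b + x c d = x a c + x b d := by
  have h0 : ∀ i, Fin.revPerm (n := n) i ≠ i ∧ Fin.revPerm (Fin.revPerm i) = i := by
    intro i
    refine ⟨fun h => ?_, by simp⟩
    have := congrArg Fin.val h
    simp [Fin.val_rev] at this
    obtain ⟨k, hk⟩ := he
    omega
  have conj : ∀ (σ : Equiv.Perm (Fin n)) (p q : Fin n), (∀ i, σ i ≠ i ∧ σ (σ i) = i) →
      ∀ i, (Equiv.swap p q * σ * Equiv.swap p q) i ≠ i ∧
        (Equiv.swap p q * σ * Equiv.swap p q) ((Equiv.swap p q * σ * Equiv.swap p q) i) = i := by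
    intro σ p q h i
    simp only [Equiv.Perm.mul_apply, Equiv.swap_apply_self, (h _).2, and_true]
    intro h'
    have := congrArg (Equiv.swap p q) h'
    rw [Equiv.swap_apply_self] at this
    exact (h _).1 this
  obtain ⟨σ₁, h1, h1a⟩ : ∃ σ : Equiv.Perm (Fin n), (∀ i, σ i ≠ i ∧ σ (σ i) = i) ∧ σ a = b := by
    refine ⟨_, conj Fin.revPerm (Fin.revPerm a) b h0, ?_⟩
    simp only [Equiv.Perm.mul_apply]
    rw [Equiv.swap_apply_of_ne_of_ne (h0 a).1.symm hab, Equiv.swap_apply_left]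
  have h1b : σ₁ b = a := by rw [← h1a, (h1 a).2]
  obtain ⟨σ, h2, h2a, h2c⟩ : ∃ σ : Equiv.Perm (Fin n), (∀ i, σ i ≠ i ∧ σ (σ i) = i) ∧
      σ a = b ∧ σ c = d := by
    refine ⟨_, conj σ₁ (σ₁ c) d h1, ?_, ?_⟩
    · simp only [Equiv.Perm.mul_apply]
      have e1 : a ≠ σ₁ c := fun h => hbc (σ₁.injective (by rw [h1b, h]))
      have e2 : b ≠ σ₁ c := fun h => hac (σ₁.injective (by rw [h1a, h]))
      rw [Equiv.swap_apply_of_ne_of_ne e1 had, h1a, Equiv.swap_apply_of_ne_of_ne e2 hbd]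
    · simp only [Equiv.Perm.mul_apply]
      rw [Equiv.swap_apply_of_ne_of_ne (h1 c).1.symm hcd, Equiv.swap_apply_left]
  have h2b : σ b = a := by rw [← h2a, (h2 a).2]
  have h2d : σ d = c := by rw [← h2c, (h2 c).2]
  have s1 := hS σ h2
  have s2 := hS _ (conj σ b c h2)
  have key : ∑ i, (x i (σ i) - x i ((Equiv.swap b c * σ * Equiv.swap b c) i)) =
      ∑ i ∈ ({a, b, c, d} : Finset (Fin n)),
        (x i (σ i) - x i ((Equiv.swap b c * σ * Equiv.swap b c) i)) := by
    symm
    apply Finset.sum_subset (Finset.subset_univ _)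
    intro i _ hi
    simp only [Finset.mem_insert, Finset.mem_singleton, not_or] at hi
    obtain ⟨i1, i2, i3, i4⟩ := hi
    have e1 : σ i ≠ b := fun h => i1 (σ.injective (by rw [h2a, h]))
    have e2 : σ i ≠ c := fun h => i4 (σ.injective (by rw [h2d, h]))
    simp only [Equiv.Perm.mul_apply]
    rw [Equiv.swap_apply_of_ne_of_ne i2 i3, Equiv.swap_apply_of_ne_of_ne e1 e2, sub_self]
  rw [Finset.sum_sub_distrib, s1, s2, Finset.sum_insert (by simp [*]),
    Finset.sum_insert (by simp [*]), Finset.sum_insert (by simp [*]), Finset.sum_singleton] at key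
  simp only [Equiv.Perm.mul_apply, Equiv.swap_apply_left, Equiv.swap_apply_right,
    Equiv.swap_apply_of_ne_of_ne hab hac, Equiv.swap_apply_of_ne_of_ne hbd.symm hcd.symm,
    h2a, h2b, h2c, h2d] at key
  have := hsym b a
  have := hsym d c
  have := hsym c a
  have := hsym d b
  linarith

theorem aux_zero {n : ℕ} (hn : 4 ≤ n) (he : Even n) (x : Fin n → Fin n → ℝ)
    (hsym : ∀ a b, x a b = x b a) (hd : ∀ a, x a a = 0)
    (hS : ∀ σ : Equiv.Perm (Fin n), (∀ i, σ i ≠ i ∧ σ (σ i) = i) → ∑ i, x i (σ i) = 0)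
    (hR : ∀ i : Fin n, (i : ℕ) < n - 1 → ∑ j, x i j = 0) : ∀ a b, x a b = 0 := by
  have h4 := aux_four x hsym hS he
  have hnR : (4 : ℝ) ≤ n := by exact_mod_cast hn
  have H : ∀ b c d : Fin n, (b : ℕ) < n - 1 → (c : ℕ) < n - 1 → b ≠ c → d ≠ b → d ≠ c →
      x b d = x c d := by
    intro b c d hb hc hbc hdb hdc
    have hk : ∀ j, x b j - x c j = (x b d - x c d) + (if j = b then x c d - x b d - x c b else 0)
        + (if j = c then x c d - x b d + x c b else 0) := by
      intro j
      by_cases jb : j = b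
      · subst jb
        simp [hbc, hd]
        ring
      by_cases jc : j = c
      · subst jc
        simp [jb, hd, hsym b j]
        ring
      simp only [jb, jc, if_false, add_zero]
      by_cases jd : j = d
      · rw [jd]
      have := h4 j b c d jb jc jd hbc hdb.symm hdc.symm
      have := hsym j b
      have := hsym j c
      linarith
    have hs := Finset.sum_congr (rfl : (Finset.univ : Finset (Fin n)) = Finset.univ) (fun j _ => hk j)
    rw [Finset.sum_sub_distrib, hR b hb, hR c hc, Finset.sum_add_distrib, Finset.sum_add_distrib] at hs
    simp at hs
    have : ((n : ℝ) - 2) * (x b d - x c d) = 0 := by linarith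
    rcases mul_eq_zero.1 this with h | h <;> linarith
  obtain ⟨m, rfl⟩ : ∃ m, n = m + 4 := ⟨n - 4, by omega⟩
  set z : Fin (m + 4) := ⟨0, by omega⟩ with hz
  set o : Fin (m + 4) := ⟨1, by omega⟩ with ho
  set L : Fin (m + 4) := ⟨m + 3, by omega⟩ with hL
  have lt : ∀ i : Fin (m + 4), i ≠ L → (i : ℕ) < m + 4 - 1 := by
    intro i hi
    have : (i : ℕ) ≠ m + 3 := fun h => hi (Fin.ext h)
    omega
  have zo : z ≠ o := by simp [hz, ho]
  have zL : z ≠ L := by simp [hz, hL]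
  have oL : o ≠ L := by simp [ho, hL]
  have hα : ∀ b, b ≠ L → x b L = x z L := by
    intro b hb
    by_cases h : b = z
    · rw [h]
    · exact H b z L (lt b hb) (lt z zL) h hb.symm zL.symm
  have H' : ∀ b c d : Fin (m + 4), b ≠ L → c ≠ L → d ≠ b → d ≠ c → x b d = x c d := by
    intro b c d hb hc h1 h2
    by_cases h : b = c
    · rw [h]
    · exact H b c d (lt b hb) (lt c hc) h h1 h2
  have hβz : ∀ d, d ≠ L → d ≠ z → x z d = x z o := by
    intro d h1 h2
    rw [hsym z d, hsym z o]
    exact H' d o z h1 oL h2.symm zo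
  have hβ : ∀ b d, b ≠ L → d ≠ L → b ≠ d → x b d = x z o := by
    intro b d hb hd' hbd
    by_cases h : d = z
    · subst h
      rw [hsym]; exact hβz b hb hbd
    · rw [H' b z d hb zL hbd.symm h]
      exact hβz d hd' h
  have r0 := hR z (lt z zL)
  have e0 : ∀ j, x z j = x z o + (if j = z then - x z o else 0) +
      (if j = L then x z L - x z o else 0) := by
    intro j
    by_cases h1 : j = z
    · rw [h1]; simp [zL, hd]
    by_cases h2 : j = L
    · rw [h2]; simp [zL.symm]
    simp [h1, h2, hβz j h2 h1]
  have h0 : ∀ i, Fin.revPerm (n := m + 4) i ≠ i ∧ Fin.revPerm (Fin.revPerm i) = i := by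
    intro i
    refine ⟨fun h => ?_, by simp⟩
    have := congrArg Fin.val h
    simp [Fin.val_rev] at this
    obtain ⟨k, hk⟩ := he
    omega
  have p0 := hS _ h0
  have rz : Fin.revPerm z = L := by ext; simp [hz, hL, Fin.val_rev]
  have rL : Fin.revPerm L = z := by rw [← rz]; simp
  have e1 : ∀ j, x j (Fin.revPerm j) = x z o + (if j = z then x z L - x z o else 0) +
      (if j = L then x z L - x z o else 0) := by
    intro j
    by_cases h1 : j = z
    · rw [h1, rz]; simp [zL]
    by_cases h2 : j = L
    · rw [h2, rL, hsym]; simp [zL.symm]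
    have : Fin.revPerm j ≠ L := fun h => h1 (Fin.revPerm.injective (by rw [h, rz]))
    simp only [h1, h2, if_false, add_zero]
    exact hβ _ _ h2 this (h0 j).1.symm
  rw [Finset.sum_congr rfl (fun j _ => e0 j), Finset.sum_add_distrib, Finset.sum_add_distrib] at r0
  rw [Finset.sum_congr rfl (fun j _ => e1 j), Finset.sum_add_distrib, Finset.sum_add_distrib] at p0
  simp at r0 p0
  have a0 : x z L = 0 := by linarith
  have b0 : x z o = 0 := by
    have : ((m : ℝ) + 2) * x z o = 0 := by linarith
    rcases mul_eq_zero.1 this with h | h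
    · have : (0 : ℝ) ≤ m := Nat.cast_nonneg m
      linarith
    · exact h
  intro a b
  by_cases hab : a = b
  · rw [hab, hd]
  by_cases ha : a = L
  · rw [ha, hsym, hα b (fun h => hab (by rw [ha, h])), a0]
  by_cases hb : b = L
  · rw [hb, hα a ha, a0]
  rw [hβ a b ha hb hab, b0]

theorem aux_f {n : ℕ} (f : Matrix (Fin n) (Fin n) ℝ →ₗ[ℝ] ℝ) (M : Matrix (Fin n) (Fin n) ℝ)
    (hM : M ∈ Omega n) : f M = (1 / 2) * ∑ i, ∑ j, M i j *
      (if i = j then 0 else f (Matrix.single i j 1) + f (Matrix.single j i 1)) := by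
  have h1 : f M = ∑ i, ∑ j, M i j * f (Matrix.single i j 1) := by
    conv_lhs => rw [Matrix.matrix_eq_sum_single M]
    simp only [map_sum]
    refine Finset.sum_congr rfl fun i _ => Finset.sum_congr rfl fun j _ => ?_
    rw [← smul_eq_mul, ← map_smul, Matrix.smul_single, smul_eq_mul, mul_one]
  have h2 : f M = ∑ i, ∑ j, M i j * f (Matrix.single j i 1) := by
    rw [h1, Finset.sum_comm]
    refine Finset.sum_congr rfl fun i _ => Finset.sum_congr rfl fun j _ => ?_
    rw [hM.1.apply]
  have h3 : ∑ i, ∑ j, M i j *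
      (if i = j then 0 else f (Matrix.single i j 1) + f (Matrix.single j i 1)) = f M + f M := by
    nth_rewrite 1 [h1]
    rw [h2, ← Finset.sum_add_distrib]
    refine Finset.sum_congr rfl fun i _ => ?_
    rw [← Finset.sum_add_distrib]
    refine Finset.sum_congr rfl fun j _ => ?_
    split_ifs with h
    · subst h; simp [hM.2 i]
    · ring
  rw [h3]; ring

theorem aux_pair {n : ℕ} (σ : Equiv.Perm (Fin n)) (h : ∀ i, σ i ≠ i ∧ σ (σ i) = i) :
    IsPairing (Matrix.of fun i j => if σ i = j then (1 : ℝ) else 0) := by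
  refine ⟨?_, fun i => by simp [(h i).1], fun i j => ?_, fun i => by simp⟩
  · ext i j
    simp only [Matrix.transpose_apply, Matrix.of_apply]
    have : σ j = i ↔ σ i = j := ⟨fun e => by rw [← e, (h j).2], fun e => by rw [← e, (h i).2]⟩
    simp [this]
  · simp only [Matrix.of_apply]
    split_ifs <;> simp

theorem aux_adj {n : ℕ} (i : Fin n) : adjR i ∈ Omega n := by
  refine ⟨?_, fun k => by simp [adjR]⟩
  ext k l
  simp only [Matrix.transpose_apply, adjR, Matrix.of_apply]
  have : (l ≠ k ∧ (i = l ∨ i = k)) ↔ (k ≠ l ∧ (i = k ∨ i = l)) := by tauto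
  simp [this]

theorem stmt0 (n : ℕ) (hn : 4 ≤ n) (he : Even n) :
    Submodule.span ℝ {S : Matrix (Fin n) (Fin n) ℝ | IsPairing S} ⊔
      Submodule.span ℝ (adjR '' {i : Fin n | (i : ℕ) < n - 1}) = Omega n := by
  apply le_antisymm
  · refine sup_le (Submodule.span_le.2 fun S hS => ⟨hS.1, hS.2.1⟩) (Submodule.span_le.2 ?_)
    rintro _ ⟨i, _, rfl⟩
    exact aux_adj i
  intro C hC
  by_contra hCW
  obtain ⟨f, hfC, hf⟩ := Submodule.exists_le_ker_of_notMem hCW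
  apply hfC
  set x : Fin n → Fin n → ℝ := fun i j =>
    (if i = j then 0 else f (Matrix.single i j 1) + f (Matrix.single j i 1)) with hx
  have hsym : ∀ a b, x a b = x b a := by
    intro a b
    simp only [hx, eq_comm (a := b) (b := a), add_comm]
  have hd : ∀ a, x a a = 0 := fun a => by simp [hx]
  have key := aux_f f
  have hx0 : ∀ a b, x a b = 0 := by
    apply aux_zero hn he x hsym hd
    · intro σ hσ
      have hp := aux_pair σ hσ
      have h1 : f _ = 0 := hf (Submodule.mem_sup_left (Submodule.subset_span hp))
      rw [key _ ⟨hp.1, hp.2.1⟩] at h1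
      change (1 / 2) * ∑ i, ∑ j, (if σ i = j then (1 : ℝ) else 0) * x i j = 0 at h1
      simpa using h1
    · intro i hi
      have h1 : f (adjR i) = 0 :=
        hf (Submodule.mem_sup_right (Submodule.subset_span ⟨i, hi, rfl⟩))
      rw [key _ (aux_adj i)] at h1
      change (1 / 2) * ∑ k, ∑ l, (if k ≠ l ∧ (i = k ∨ i = l) then (1 : ℝ) else 0) * x k l = 0 at h1
      have h2 : ∀ k l, (if k ≠ l ∧ (i = k ∨ i = l) then (1 : ℝ) else 0) * x k l =
          (if i = k then x k l else 0) + (if i = l then x k l else 0) := by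
        intro k l
        by_cases hkl : k = l
        · subst hkl; simp [hd]
        by_cases a1 : i = k
        · have a2 : i ≠ l := fun h => hkl (by rw [← a1, h])
          simp [hkl, a1]
        · simp [hkl, a1]
      simp only [h2, Finset.sum_add_distrib] at h1
      rw [Finset.sum_comm] at h1
      simp only [Finset.sum_ite_eq, Finset.mem_univ, if_true] at h1
      simp only [hsym _ i] at h1
      linarith
  rw [key C hC]
  change (1 / 2) * ∑ i, ∑ j, C i j * x i j = 0
  simp [hx0]
end

section
/- For every even integer n ≥ 4, the linear span of the pairing matrices and the linear span of the adjacent set matrices R_1, …, R_{n−1} intersect trivially: span{S : S ∈ 𝕊(n)} ∩ span{R_i : 1 ≤ i ≤ n−1} = {0}, where 0 is the n×n zero matrix. -/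
open Finset

theorem stmt1 (n : ℕ) (hn : 4 ≤ n) (he : Even n) :
    Submodule.span ℝ {S : Matrix (Fin n) (Fin n) ℝ | IsPairing S} ⊓
      Submodule.span ℝ (adjR '' {i : Fin n | (i : ℕ) < n - 1}) = ⊥ := by
  have h1 : ∀ M ∈ Submodule.span ℝ {S : Matrix (Fin n) (Fin n) ℝ | IsPairing S},
      ∃ c : ℝ, ∀ i, ∑ j, M i j = c := by
    intro M hM
    induction hM using Submodule.span_induction with
    | mem S hS => exact ⟨1, hS.2.2.2⟩
    | zero => exact ⟨0, by simp⟩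
    | add x y _ _ hx hy =>
      obtain ⟨c, hc⟩ := hx
      obtain ⟨d, hd⟩ := hy
      exact ⟨c + d, fun i => by simp [Finset.sum_add_distrib, hc, hd]⟩
    | smul r x _ hx =>
      obtain ⟨c, hc⟩ := hx
      exact ⟨r * c, fun i => by simp [← Finset.mul_sum, hc]⟩
  let z : Fin n := ⟨n - 1, by omega⟩
  have h2 : ∀ M ∈ Submodule.span ℝ (adjR '' {i : Fin n | (i : ℕ) < n - 1}),
      ∃ a : Fin n → ℝ, a z = 0 ∧ ∀ k l, M k l = if k = l then 0 else a k + a l := by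
    intro M hM
    induction hM using Submodule.span_induction with
    | mem S hS =>
      obtain ⟨i, hi, rfl⟩ := hS
      have hiz : i ≠ z := by
        rintro rfl
        simp [z] at hi
      refine ⟨fun k => if i = k then 1 else 0, by simp [hiz], fun k l => ?_⟩
      simp only [adjR, Matrix.of_apply]
      by_cases hkl : k = l
      · simp [hkl]
      · by_cases hk : i = k
        · have : i ≠ l := fun h => hkl (hk.symm.trans h)
          simp [hkl, hk]
        · simp [hkl, hk]
    | zero => exact ⟨0, by simp, by simp⟩
    | add x y _ _ hx hy =>
      obtain ⟨a, ha, hc⟩ := hx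
      obtain ⟨b, hb, hd⟩ := hy
      refine ⟨a + b, by simp [ha, hb], fun k l => ?_⟩
      rw [Matrix.add_apply, hc, hd]
      split_ifs
      · simp
      · simp only [Pi.add_apply]; ring
    | smul r x _ hx =>
      obtain ⟨a, ha, hc⟩ := hx
      refine ⟨r • a, by simp [ha], fun k l => ?_⟩
      rw [Matrix.smul_apply, hc]
      split_ifs
      · simp
      · simp only [Pi.smul_apply, smul_eq_mul]; ring
  rw [Submodule.eq_bot_iff]
  rintro M ⟨hM1, hM2⟩
  obtain ⟨c, hc⟩ := h1 M hM1
  obtain ⟨a, haz, ha⟩ := h2 M hM2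
  have hrow : ∀ k, ((n : ℝ) - 2) * a k + ∑ l, a l = c := by
    intro k
    rw [← hc k]
    have : ∀ l, M k l = a k + a l - (if k = l then 2 * a k else 0) := by
      intro l
      rw [ha]
      split_ifs with h
      · subst h; ring
      · ring
    simp only [this, Finset.sum_sub_distrib, Finset.sum_add_distrib, Finset.sum_ite_eq,
      Finset.mem_univ, if_true, Finset.sum_const, Finset.card_univ, Fintype.card_fin, nsmul_eq_mul]
    ring
  have hn' : (4 : ℝ) ≤ n := by exact_mod_cast hn
  have ha0 : ∀ k, a k = 0 := by
    intro k
    have e1 := hrow k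
    have e2 := hrow z
    rw [haz] at e2
    have e3 : ((n : ℝ) - 2) * a k = 0 := by linarith
    rcases mul_eq_zero.mp e3 with h | h
    · linarith
    · exact h
  ext k l
  rw [ha]
  simp [ha0]
end

section
/- For every even integer n ≥ 4, the dimension of the linear span of the set of all pairing matrices equals (n−1)(n−2)/2: dim span{S : S ∈ 𝕊(n)} = (n−1)(n−2)/2. -/
open Finset

/-- The elementary symmetric matrix of the pair `a, b`. -/
def upair {n : ℕ} (a b : Fin n) : Matrix (Fin n) (Fin n) ℝ :=
  Matrix.of fun i j => (if i = a ∧ j = b then 1 else 0) + (if i = b ∧ j = a then 1 else 0)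

/-- The matrix of a permutation. -/
def pmat {n : ℕ} (σ : Equiv.Perm (Fin n)) : Matrix (Fin n) (Fin n) ℝ :=
  Matrix.of fun i j => if σ i = j then 1 else 0

theorem pmat_isPairing {n : ℕ} (σ : Equiv.Perm (Fin n)) (h1 : ∀ i, σ i ≠ i)
    (h2 : ∀ i, σ (σ i) = i) : IsPairing (pmat σ) := by
  refine ⟨?_, ?_, ?_, ?_⟩
  · ext i j
    have : σ j = i ↔ σ i = j := ⟨fun h => by rw [← h, h2], fun h => by rw [← h, h2]⟩
    simp [pmat, this]
  · intro i; simp [pmat, h1]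
  · intro i j; by_cases h : σ i = j <;> simp [pmat, h]
  · intro i; simp [pmat]

theorem exists_inv {n : ℕ} (hn : 4 ≤ n) (he : Even n) (a b c d : Fin n)
    (hab : a ≠ b) (hac : a ≠ c) (had : a ≠ d) (hbc : b ≠ c) (hbd : b ≠ d) (hcd : c ≠ d) :
    ∃ σ : Equiv.Perm (Fin n), (∀ i, σ i ≠ i) ∧ (∀ i, σ (σ i) = i) ∧ σ a = b ∧ σ c = d := by
  let x0 : Fin n := ⟨0, by omega⟩
  let x1 : Fin n := ⟨1, by omega⟩
  let f : Fin 4 ↪ Fin n := ⟨![x0, x0.rev, x1, x1.rev], by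
    intro i j hij
    fin_cases i <;> fin_cases j <;> simp [x0, x1, Fin.ext_iff, Fin.val_rev] at hij ⊢ <;> omega⟩
  let f' : Fin 4 ↪ Fin n := ⟨![a, b, c, d], by
    intro i j hij
    fin_cases i <;> fin_cases j <;> simp_all [eq_comm]⟩
  obtain ⟨g, hg⟩ := (Equiv.Perm.isMultiplyPretransitive (Fin n) 4).exists_smul_eq f f'
  have hg' : ∀ i, g (f i) = f' i := fun i => by rw [← hg]; rfl
  have e0 : g x0 = a := hg' 0
  have e1 : g x0.rev = b := hg' 1
  have e2 : g x1 = c := hg' 2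
  have e3 : g x1.rev = d := hg' 3
  refine ⟨(g.symm.trans Fin.revPerm).trans g, ?_, ?_, ?_, ?_⟩
  · intro i h
    simp only [Equiv.trans_apply, Fin.revPerm_apply] at h
    have h' := congrArg g.symm h
    rw [Equiv.symm_apply_apply] at h'
    have := congrArg Fin.val h'
    rw [Fin.val_rev] at this
    obtain ⟨k, hk⟩ := he
    have := (g.symm i).2
    omega
  · intro i; simp
  · simp [← e0, ← e1]
  · simp [← e2, ← e3]

theorem quad_mem {n : ℕ} (hn : 4 ≤ n) (he : Even n) (a b c d : Fin n)
    (hab : a ≠ b) (hac : a ≠ c) (had : a ≠ d) (hbc : b ≠ c) (hbd : b ≠ d) (hcd : c ≠ d) :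
    upair a b + upair c d - upair a c - upair b d ∈
      Submodule.span ℝ {S : Matrix (Fin n) (Fin n) ℝ | IsPairing S} := by
  obtain ⟨σ, h1, h2, h3, h4⟩ := exists_inv hn he a b c d hab hac had hbc hbd hcd
  have h3' : σ b = a := by rw [← h3, h2]
  have h4' : σ d = c := by rw [← h4, h2]
  let τ : Equiv.Perm (Fin n) := ((Equiv.swap b c).trans σ).trans (Equiv.swap b c)
  have t : ∀ i, τ i = Equiv.swap b c (σ (Equiv.swap b c i)) := fun i => rfl
  have hp : IsPairing (pmat τ) := by
    apply pmat_isPairing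
    · intro i h
      rw [t] at h
      apply h1 (Equiv.swap b c i)
      have := congrArg (Equiv.swap b c) h
      simpa using this
    · intro i; simp [t, h2]
  have key : upair a b + upair c d - upair a c - upair b d = pmat σ - pmat τ := by
    have ta : τ a = c := by
      rw [t, Equiv.swap_apply_of_ne_of_ne hab hac, h3, Equiv.swap_apply_left]
    have tb : τ b = d := by
      rw [t, Equiv.swap_apply_left, h4, Equiv.swap_apply_of_ne_of_ne hbd.symm hcd.symm]
    have tc : τ c = a := by
      rw [t, Equiv.swap_apply_right, h3', Equiv.swap_apply_of_ne_of_ne hab hac]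
    have td : τ d = b := by
      rw [t, Equiv.swap_apply_of_ne_of_ne hbd.symm hcd.symm, h4', Equiv.swap_apply_right]
    ext i j
    simp only [upair, pmat, Matrix.sub_apply, Matrix.add_apply, Matrix.of_apply]
    by_cases ia : i = a
    · rw [ia]
      simp [hab, hac, had, hbc, hbd, hcd, hab.symm, hac.symm, had.symm, hbc.symm, hbd.symm,
        hcd.symm, h3, h3', h4, h4', ta, tb, tc, td, eq_comm (a := j)]
    by_cases ib : i = b
    · rw [ib]
      simp [hab, hac, had, hbc, hbd, hcd, hab.symm, hac.symm, had.symm, hbc.symm, hbd.symm,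
        hcd.symm, h3, h3', h4, h4', ta, tb, tc, td, eq_comm (a := j)]
    by_cases ic : i = c
    · rw [ic]
      simp [hab, hac, had, hbc, hbd, hcd, hab.symm, hac.symm, had.symm, hbc.symm, hbd.symm,
        hcd.symm, h3, h3', h4, h4', ta, tb, tc, td, eq_comm (a := j)]
    by_cases id : i = d
    · rw [id]
      simp [hab, hac, had, hbc, hbd, hcd, hab.symm, hac.symm, had.symm, hbc.symm, hbd.symm,
        hcd.symm, h3, h3', h4, h4', ta, tb, tc, td, eq_comm (a := j)]
    have : τ i = σ i := by
      rw [t, Equiv.swap_apply_of_ne_of_ne ib ic, Equiv.swap_apply_of_ne_of_ne]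
      · intro h; apply ia; rw [← h2 i, h, h3']
      · intro h; apply id; rw [← h2 i, h, h4]
    simp [ia, ib, ic, id, this]
  rw [key]
  exact Submodule.sub_mem _ (Submodule.subset_span (pmat_isPairing σ h1 h2))
    (Submodule.subset_span hp)

/-- Index type of the pairs below the diagonal avoiding the last index. -/
abbrev LowIdx (m : ℕ) := {p : Fin m × Fin m // p.2 < p.1}

theorem card_lowIdx (m : ℕ) : Fintype.card (LowIdx m) = m * (m - 1) / 2 := by
  rw [Fintype.card_congr (Equiv.subtypeProdEquivSigmaSubtype (fun a b : Fin m => b < a)),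
    Fintype.card_sigma, ← Finset.sum_range_id, ← Fin.sum_univ_eq_sum_range (fun i => i) m]
  refine Finset.sum_congr rfl fun i _ => ?_
  rw [Fintype.card_subtype]
  have : (univ.filter fun b : Fin m => b < i) = Finset.Iio i := by ext; simp
  rw [this, Fin.card_Iio]

/-- Restriction to the entries indexed by `LowIdx`. -/
def lowMap (m : ℕ) : Matrix (Fin (m+1)) (Fin (m+1)) ℝ →ₗ[ℝ] (LowIdx m → ℝ) where
  toFun A p := A p.1.1.castSucc p.1.2.castSucc
  map_add' _ _ := rfl
  map_smul' _ _ := rfl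

theorem lowMap_apply (m : ℕ) (A : Matrix (Fin (m+1)) (Fin (m+1)) ℝ) (p : LowIdx m) :
    lowMap m A p = A p.1.1.castSucc p.1.2.castSucc := rfl

theorem span_props {n : ℕ} (X : Matrix (Fin n) (Fin n) ℝ)
    (hX : X ∈ Submodule.span ℝ {S : Matrix (Fin n) (Fin n) ℝ | IsPairing S}) :
    (∀ i j, X i j = X j i) ∧ (∀ i, X i i = 0) ∧ ∃ c, ∀ i, ∑ j, X i j = c := by
  induction hX using Submodule.span_induction with
  | mem x h => exact ⟨fun i j => h.1.apply j i, h.2.1, 1, h.2.2.2⟩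
  | zero => exact ⟨by simp, by simp, 0, by simp⟩
  | add x y _ _ hx hy =>
    obtain ⟨a1, a2, c, a3⟩ := hx
    obtain ⟨b1, b2, d, b3⟩ := hy
    refine ⟨fun i j => ?_, fun i => ?_, c + d, fun i => ?_⟩
    · simp [a1 i j, b1 i j]
    · simp [a2, b2]
    · simp [Finset.sum_add_distrib, a3, b3]
  | smul r x _ hx =>
    obtain ⟨a1, a2, c, a3⟩ := hx
    refine ⟨fun i j => ?_, fun i => ?_, r * c, fun i => ?_⟩
    · simp [a1 i j]
    · simp [a2]
    · simp [← Finset.mul_sum, a3]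

theorem low_inj {m : ℕ} (hm : 3 ≤ m) (X : Matrix (Fin (m+1)) (Fin (m+1)) ℝ)
    (hX : X ∈ Submodule.span ℝ {S : Matrix (Fin (m+1)) (Fin (m+1)) ℝ | IsPairing S})
    (h0 : lowMap m X = 0) : X = 0 := by
  obtain ⟨h1, h2, c, h3⟩ := span_props X hX
  have h4 : ∀ i j : Fin m, X i.castSucc j.castSucc = 0 := by
    intro i j
    rcases lt_trichotomy i j with h | h | h
    · rw [h1]; exact congrFun h0 ⟨(j, i), h⟩
    · rw [h]; exact h2 _
    · exact congrFun h0 ⟨(i, j), h⟩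
  have h5 : ∀ i : Fin m, X i.castSucc (Fin.last m) = c := by
    intro i
    have := h3 i.castSucc
    rw [Fin.sum_univ_castSucc] at this
    simpa [h4] using this
  have h6 : c = 0 := by
    have := h3 (Fin.last m)
    rw [Fin.sum_univ_castSucc] at this
    simp only [h1 (Fin.last m), h5, h2] at this
    simp at this
    have hm' : (3 : ℝ) ≤ m := by exact_mod_cast hm
    have : ((m : ℝ) - 1) * c = 0 := by linarith
    rcases mul_eq_zero.1 this with h | h
    · linarith
    · exact h
  ext i j
  induction i using Fin.lastCases with
  | last =>
    induction j using Fin.lastCases with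
    | last => exact h2 _
    | cast j => rw [h1, h5, h6]; rfl
  | cast i =>
    induction j using Fin.lastCases with
    | last => rw [h5, h6]; rfl
    | cast j => exact h4 _ _

theorem upair_comm {n : ℕ} (a b : Fin n) : upair a b = upair b a := by
  ext i j; simp [upair, add_comm]

theorem low_upair_last {m : ℕ} (a : Fin (m+1)) : lowMap m (upair a (Fin.last m)) = 0 := by
  ext p
  simp [lowMap_apply, upair, Fin.castSucc_ne_last]

theorem pmat_eq_sum {n : ℕ} (σ : Equiv.Perm (Fin n)) (h2 : ∀ i, σ (σ i) = i) :
    ∑ i, upair i (σ i) = (2 : ℝ) • pmat σ := by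
  ext k l
  rw [Matrix.sum_apply]
  have : ∀ i, upair i (σ i) k l = (if k = i then (if σ k = l then (1 : ℝ) else 0) else 0)
      + (if l = i then (if σ k = l then (1 : ℝ) else 0) else 0) := by
    intro i
    have e : σ l = k ↔ σ k = l := ⟨fun h => by rw [← h, h2], fun h => by rw [← h, h2]⟩
    simp only [upair, Matrix.of_apply]
    congr 1
    · by_cases h : k = i
      · subst h; simp [eq_comm]
      · simp [h]
    · by_cases h : l = i
      · subst h; simp only [and_true, if_true, ← e]; simp [eq_comm]
      · simp [h]
  simp only [this, Finset.sum_add_distrib]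
  simp [pmat]
  split_ifs <;> norm_num

theorem low_upair_mem {m : ℕ} (hm : 3 ≤ m) (he : Even (m+1)) (a b : Fin (m+1)) (hab : a ≠ b) :
    lowMap m (upair a b) ∈ (Submodule.span ℝ
      {S : Matrix (Fin (m+1)) (Fin (m+1)) ℝ | IsPairing S}).map (lowMap m) := by
  set R := (Submodule.span ℝ
      {S : Matrix (Fin (m+1)) (Fin (m+1)) ℝ | IsPairing S}).map (lowMap m) with hR
  by_cases ha : a = Fin.last m
  · rw [ha, upair_comm, low_upair_last]; exact R.zero_mem
  by_cases hb : b = Fin.last m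
  · rw [hb, low_upair_last]; exact R.zero_mem
  have step : ∀ x y z : Fin (m+1), x ≠ y → x ≠ z → y ≠ z → x ≠ Fin.last m → y ≠ Fin.last m →
      z ≠ Fin.last m → lowMap m (upair x y) - lowMap m (upair x z) ∈ R := by
    intro x y z hxy hxz hyz hx hy hz
    have := Submodule.mem_map_of_mem (f := lowMap m)
      (quad_mem (by omega) he x y z (Fin.last m) hxy hxz hx hyz hy hz)
    simpa only [map_sub, map_add, low_upair_last, add_zero, sub_zero] using this
  have step1 : ∀ x y z : Fin (m+1), x ≠ y → x ≠ z → x ≠ Fin.last m → y ≠ Fin.last m →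
      z ≠ Fin.last m → lowMap m (upair x y) - lowMap m (upair x z) ∈ R := by
    intro x y z hxy hxz hx hy hz
    by_cases hyz : y = z
    · subst hyz; rw [sub_self]; exact R.zero_mem
    · exact step x y z hxy hxz hyz hx hy hz
  have step2 : ∀ x y : Fin (m+1), x ≠ y → x ≠ Fin.last m → y ≠ Fin.last m →
      lowMap m (upair x y) - lowMap m (upair a b) ∈ R := by
    intro x y hxy hx hy
    by_cases hxa : x = a
    · subst hxa; exact step1 x y b hxy hab hx hy hb
    · have h1 := step1 x y a hxy hxa hx hy ha
      have h2 := step1 a x b (Ne.symm hxa) hab ha hx hb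
      rw [upair_comm a x] at h2
      have := R.add_mem h1 h2
      simpa using this
  -- a third and a pairing
  obtain ⟨c, hc⟩ : ∃ c : Fin (m+1), c ∉ ({a, b, Fin.last m} : Finset (Fin (m+1))) := by
    by_contra hcon
    push Not at hcon
    have h1 : (univ : Finset (Fin (m+1))) ⊆ {a, b, Fin.last m} := fun x _ => hcon x
    have h2 := Finset.card_le_card h1
    have h3 := Finset.card_le_three (a := a) (b := b) (c := Fin.last m)
    simp at h2
    omega
  simp only [Finset.mem_insert, Finset.mem_singleton, not_or] at hc
  obtain ⟨σ, s1, s2, s3, s4⟩ := exists_inv (by omega) he a b c (Fin.last m) hab (Ne.symm hc.1) ha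
    (Ne.symm hc.2.1) hb hc.2.2
  have hS : lowMap m (∑ i, upair i (σ i)) ∈ R := by
    rw [pmat_eq_sum σ s2, map_smul]
    exact R.smul_mem _ (Submodule.mem_map_of_mem
      (Submodule.subset_span (pmat_isPairing σ s1 s2)))
  rw [map_sum] at hS
  set F := univ.filter fun i : Fin (m+1) => i ≠ Fin.last m ∧ σ i ≠ Fin.last m with hF
  have hD : ∑ i, (lowMap m (upair i (σ i)) - if i ∈ F then lowMap m (upair a b) else 0) ∈ R := by
    refine R.sum_mem fun i _ => ?_
    by_cases hi : i ∈ F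
    · rw [if_pos hi]
      simp only [hF, Finset.mem_filter, Finset.mem_univ, true_and] at hi
      exact step2 _ _ (Ne.symm (s1 i)) hi.1 hi.2
    · rw [if_neg hi, sub_zero]
      have : i = Fin.last m ∨ σ i = Fin.last m := by
        by_contra hcon
        push Not at hcon
        exact hi (by simp [hF, hcon])
      rcases this with h | h
      · rw [h, upair_comm, low_upair_last]; exact R.zero_mem
      · rw [h, low_upair_last]; exact R.zero_mem
  rw [Finset.sum_sub_distrib] at hD
  have hE := R.sub_mem hS hD
  rw [sub_sub_cancel, Finset.sum_ite_mem, Finset.univ_inter, Finset.sum_const,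
    ← Nat.cast_smul_eq_nsmul ℝ] at hE
  have hF0 : (F.card : ℝ) ≠ 0 := by
    have : a ∈ F := by simp [hF, ha, s3, hb]
    exact_mod_cast (Finset.card_pos.2 ⟨a, this⟩).ne'
  exact (R.smul_mem_iff hF0).1 hE

theorem low_surj {m : ℕ} (hm : 3 ≤ m) (he : Even (m+1)) :
    (Submodule.span ℝ
      {S : Matrix (Fin (m+1)) (Fin (m+1)) ℝ | IsPairing S}).map (lowMap m) = ⊤ := by
  rw [eq_top_iff]
  intro v _
  have hv : v = ∑ p : LowIdx m, v p • lowMap m (upair p.1.1.castSucc p.1.2.castSucc) := by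
    ext q
    have : ∀ p : LowIdx m, lowMap m (upair p.1.1.castSucc p.1.2.castSucc) q
        = if q = p then 1 else 0 := by
      rintro ⟨⟨a, b⟩, hp⟩
      obtain ⟨⟨c, d⟩, hq⟩ := q
      simp only at hp hq
      have : ¬ (c = b ∧ d = a) := by rintro ⟨rfl, rfl⟩; exact lt_asymm hp hq
      simp [lowMap_apply, upair, this]
    simp [Finset.sum_apply, this]
  rw [hv]
  refine Submodule.sum_mem _ fun p _ => Submodule.smul_mem _ _ (low_upair_mem hm he _ _ ?_)
  intro h
  exact p.2.ne' (Fin.castSucc_injective m h)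

theorem stmt3 (n : ℕ) (hn : 4 ≤ n) (he : Even n) :
    Module.finrank ℝ (Submodule.span ℝ {S : Matrix (Fin n) (Fin n) ℝ | IsPairing S})
      = (n - 1) * (n - 2) / 2 := by
  obtain ⟨m, rfl⟩ : ∃ m, n = m + 1 := ⟨n - 1, by omega⟩
  have hm : 3 ≤ m := by omega
  set W := Submodule.span ℝ {S : Matrix (Fin (m+1)) (Fin (m+1)) ℝ | IsPairing S} with hW
  have hinj : Function.Injective ((lowMap m).domRestrict W) := by
    rw [← LinearMap.ker_eq_bot, LinearMap.ker_eq_bot']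
    rintro ⟨X, hX⟩ h
    exact Subtype.ext (low_inj hm X hX h)
  have hsurj : Function.Surjective ((lowMap m).domRestrict W) := by
    intro v
    have : v ∈ W.map (lowMap m) := by rw [low_surj hm he]; trivial
    obtain ⟨X, hX, h⟩ := this
    exact ⟨⟨X, hX⟩, h⟩
  rw [(LinearEquiv.ofBijective _ ⟨hinj, hsurj⟩).finrank_eq, Module.finrank_fintype_fun_eq_card,
    card_lowIdx]
  rfl
end

section
/- Let n be an even integer with n ≥ 4 and let A, B ∈ Ω_n. Then A = B if and only if ⟨S,A⟩ = ⟨S,B⟩ for every pairing matrix S ∈ 𝕊(n) and ⟨R_i,A⟩ = ⟨R_i,B⟩ for every 1 ≤ i ≤ n. -/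
open Finset

lemma aux_pair_s4 {n m : ℕ} (C : Matrix (Fin n) (Fin n) ℝ) (hC : hollowSym C)
    (h : ∀ S, IsPairing S → innerH S C = 0) (e : Fin m × Bool ≃ Fin n) :
    ∑ k, C (e (k, false)) (e (k, true)) = 0 := by
  have hfl : ∀ p : Fin m × Bool, ((p.1, !p.2) : Fin m × Bool) ≠ p := by
    rintro ⟨k, b⟩ hh
    cases b <;> simp at hh
  let f : Fin n → Fin n := fun i => e ((e.symm i).1, !(e.symm i).2)
  have hff : ∀ i, f (f i) = i := by intro i; simp [f]
  have hne : ∀ i, f i ≠ i := by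
    intro i hi
    have : ((e.symm i).1, !(e.symm i).2) = e.symm i := by
      apply e.injective
      simpa [f] using hi
    exact hfl _ this
  have hS := h (Matrix.of fun i j => if f i = j then (1 : ℝ) else 0) (by
    refine ⟨?_, ?_, ?_, ?_⟩
    · ext i j
      simp only [Matrix.transpose_apply, Matrix.of_apply]
      have : f j = i ↔ f i = j :=
        ⟨fun h => by rw [← h, hff], fun h => by rw [← h, hff]⟩
      simp [this]
    · intro i; simp [hne i]
    · intro i j
      by_cases hh : f i = j <;> simp [hh]
    · intro i; simp)
  simp only [innerH, Matrix.of_apply, ite_mul, one_mul, zero_mul, Finset.sum_ite_eq,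
    Finset.mem_univ, if_true] at hS
  rw [← e.sum_comp, Fintype.sum_prod_type] at hS
  have : ∀ k : Fin m, ∑ b : Bool, C (e (k, b)) (f (e (k, b)))
      = 2 * C (e (k, false)) (e (k, true)) := by
    intro k
    have := hC.1.apply (e (k, false)) (e (k, true))
    simp [f, this]
    ring
  simp only [this, ← Finset.mul_sum] at hS
  linarith

lemma aux_switch {n : ℕ} (he : Even n) (C : Matrix (Fin n) (Fin n) ℝ) (hn : 4 ≤ n)
    (hC : hollowSym C) (h : ∀ S, IsPairing S → innerH S C = 0) (a b c d : Fin n)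
    (hab : a ≠ b) (hac : a ≠ c) (had : a ≠ d) (hbc : b ≠ c) (hbd : b ≠ d) (hcd : c ≠ d) :
    C a b + C c d = C a c + C b d := by
  obtain ⟨m, hm⟩ : ∃ m, n = (m + 2) * 2 := by
    obtain ⟨r, hr⟩ := he
    exact ⟨r - 2, by omega⟩
  have e0 : Fin (m + 2) × Bool ≃ Fin n := Fintype.equivOfCardEq (by simp [hm])
  have h01 : (0 : Fin (m + 2)) ≠ 1 := by simp
  let x : Fin 4 ↪ Fin n := ⟨![e0 (0, false), e0 (0, true), e0 (1, false), e0 (1, true)], by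
    intro i j hij
    fin_cases i <;> fin_cases j <;> simp_all⟩
  let y : Fin 4 ↪ Fin n := ⟨![a, b, c, d], by
    intro i j hij
    fin_cases i <;> fin_cases j <;> simp_all⟩
  obtain ⟨g, hg⟩ := (Equiv.Perm.isMultiplyPretransitive (Fin n) 4).exists_smul_eq x y
  have hg' : ∀ i, g (x i) = y i := fun i => by rw [← hg]; rfl
  let e := e0.trans g
  have ea : e (0, false) = a := hg' 0
  have eb : e (0, true) = b := hg' 1
  have ec : e (1, false) = c := hg' 2
  have ed : e (1, true) = d := hg' 3
  have h1 := aux_pair_s4 C hC h e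
  have h2 := aux_pair_s4 C hC h
    ((Equiv.swap ((0 : Fin (m + 2)), true) ((1 : Fin (m + 2)), false)).trans e)
  rw [Fin.sum_univ_succ, Fin.sum_univ_succ] at h1 h2
  have s1 : (Fin.succ 0 : Fin (m + 2)) = 1 := rfl
  have q1 : ∀ i : Fin m, i.succ.succ ≠ (1 : Fin (m + 2)) := by
    intro i hi
    have := congrArg Fin.val hi
    simp at this
  have q0 : ∀ i : Fin m, i.succ.succ ≠ (0 : Fin (m + 2)) := fun i => Fin.succ_ne_zero _
  have t1 : ∀ i : Fin m, Equiv.swap ((0 : Fin (m + 2)), true) ((1 : Fin (m + 2)), false)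
      (i.succ.succ, true) = (i.succ.succ, true) := by
    intro i
    apply Equiv.swap_apply_of_ne_of_ne <;> simp [q0]
  have t2 : ∀ i : Fin m, Equiv.swap ((0 : Fin (m + 2)), true) ((1 : Fin (m + 2)), false)
      (i.succ.succ, false) = (i.succ.succ, false) := by
    intro i
    apply Equiv.swap_apply_of_ne_of_ne <;> simp [q1]
  have t3 : Equiv.swap ((0 : Fin (m + 2)), true) ((1 : Fin (m + 2)), false)
      (0, false) = (0, false) := by
    apply Equiv.swap_apply_of_ne_of_ne <;> simp
  have t4 : Equiv.swap ((0 : Fin (m + 2)), true) ((1 : Fin (m + 2)), false)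
      (1, true) = (1, true) := by
    apply Equiv.swap_apply_of_ne_of_ne <;> simp
  simp only [s1, Equiv.trans_apply, t1, t2, t3, t4, Equiv.swap_apply_left,
    Equiv.swap_apply_right, ea, eb, ec, ed] at h1 h2
  linarith

lemma aux_row {n : ℕ} (C : Matrix (Fin n) (Fin n) ℝ) (hC : hollowSym C) (i : Fin n) :
    innerH (adjR i) C = ∑ j, C i j := by
  have key : ∀ k l, adjR i k l * C k l
      = (if i = k then C k l else 0) + (if i = l then C k l else 0) := by
    intro k l
    by_cases hkl : k = l
    · subst hkl
      simp [adjR, hC.2]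
    · by_cases h1 : i = k
      · have h2 : i ≠ l := fun h2 => hkl (h1.symm.trans h2)
        simp [adjR, hkl, h1]
      · by_cases h2 : i = l <;> simp [adjR, hkl, Ne.symm hkl, h1, h2]
  simp only [innerH, key, Finset.sum_add_distrib, Finset.sum_ite_eq, Finset.mem_univ, if_true]
  rw [Finset.sum_comm]
  simp only [Finset.sum_ite_eq, Finset.mem_univ, if_true]
  have : ∀ j, C j i = C i j := fun j => hC.1.apply i j
  simp only [this]
  ring

lemma aux_zero_s4 {n : ℕ} (hn : 4 ≤ n) (he : Even n) (C : Matrix (Fin n) (Fin n) ℝ)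
    (hC : hollowSym C) (h : ∀ S, IsPairing S → innerH S C = 0)
    (hr : ∀ i, ∑ j, C i j = 0) : C = 0 := by
  have hn' : (4 : ℝ) ≤ n := by exact_mod_cast hn
  have eqrow : ∀ a b c : Fin n, a ≠ b → a ≠ c → b ≠ c → C a b = C a c := by
    intro a b c hab hac hbc
    have hs : ∑ d, (C a b + C c d - C a c - C b d)
        = ∑ d ∈ ({a, b, c} : Finset (Fin n)), (C a b + C c d - C a c - C b d) := by
      symm
      apply Finset.sum_subset (Finset.subset_univ _)
      intro d _ hd
      simp only [Finset.mem_insert, Finset.mem_singleton, not_or] at hd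
      have := aux_switch he C hn hC h a b c d hab hac (Ne.symm hd.1) hbc
        (Ne.symm hd.2.1) (Ne.symm hd.2.2)
      linarith
    rw [Finset.sum_insert (by simp [hab, hac]), Finset.sum_insert (by simp [hbc]),
      Finset.sum_singleton] at hs
    simp only [Finset.sum_sub_distrib, Finset.sum_add_distrib, hr, Finset.sum_const,
      Finset.card_univ, Fintype.card_fin, nsmul_eq_mul] at hs
    have e1 : C c a = C a c := hC.1.apply a c
    have e2 : C b a = C a b := hC.1.apply a b
    have e3 : C c b = C b c := hC.1.apply b c
    rw [e1, e2, e3, hC.2, hC.2] at hs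
    have : ((n : ℝ) - 2) * (C a b - C a c) = 0 := by linarith
    rcases mul_eq_zero.1 this with h' | h' <;> linarith
  ext a b
  by_cases hab : a = b
  · subst hab; simpa using hC.2 a
  · have hs : ∑ d, (C a d - C a b)
        = ∑ d ∈ ({a} : Finset (Fin n)), (C a d - C a b) := by
      symm
      apply Finset.sum_subset (Finset.subset_univ _)
      intro d _ hd
      simp only [Finset.mem_singleton] at hd
      by_cases hdb : d = b
      · simp [hdb]
      · have := eqrow a d b (Ne.symm hd) hab hdb
        linarith
    simp only [Finset.sum_sub_distrib, hr, Finset.sum_const, Finset.card_univ,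
      Fintype.card_fin, nsmul_eq_mul, Finset.sum_singleton, Finset.card_singleton, Nat.cast_one,
      hC.2] at hs
    have : ((n : ℝ) - 1) * C a b = 0 := by linarith
    rw [Matrix.zero_apply]
    rcases mul_eq_zero.1 this with h' | h' <;> linarith

lemma aux_sub {n : ℕ} (X A B : Matrix (Fin n) (Fin n) ℝ) :
    innerH X (A - B) = innerH X A - innerH X B := by
  simp only [innerH, Matrix.sub_apply, mul_sub, Finset.sum_sub_distrib]

theorem stmt4 (n : ℕ) (hn : 4 ≤ n) (he : Even n) (A B : Matrix (Fin n) (Fin n) ℝ)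
    (hA : hollowSym A) (hB : hollowSym B) :
    A = B ↔ ((∀ S, IsPairing S → innerH S A = innerH S B) ∧
      ∀ i : Fin n, innerH (adjR i) A = innerH (adjR i) B) := by
  constructor
  · rintro rfl
    exact ⟨fun _ _ => rfl, fun _ => rfl⟩
  · rintro ⟨h1, h2⟩
    have hC : hollowSym (A - B) := ⟨hA.1.sub hB.1, fun i => by simp [hA.2, hB.2]⟩
    rw [← sub_eq_zero]
    refine aux_zero_s4 hn he _ hC (fun S hS => ?_) (fun i => ?_)
    · rw [aux_sub, h1 S hS, sub_self]
    · rw [← aux_row _ hC, aux_sub, h2 i, sub_self]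
end

section
/- Let n be an even integer with n ≥ 4 and let A, B ∈ Ω_n. Then ⟨S,A⟩ = ⟨S,B⟩ for every pairing matrix S ∈ 𝕊(n) (i.e., A ~ B) if and only if for every pair of indices 1 ≤ i < j ≤ n, A_{i,j} − (⟨R_i,A⟩ + ⟨R_j,A⟩)/(n−2) = B_{i,j} − (⟨R_i,B⟩ + ⟨R_j,B⟩)/(n−2). -/
open Finset

def FpfInv {n : ℕ} (s : Equiv.Perm (Fin n)) : Prop := ∀ i, s i ≠ i ∧ s (s i) = i

theorem FpfInv.conj {n : ℕ} {s : Equiv.Perm (Fin n)} (h : FpfInv s) (a b : Fin n) :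
    FpfInv (Equiv.swap a b * s * Equiv.swap a b) := by
  intro i
  constructor
  · intro h2
    apply (h (Equiv.swap a b i)).1
    have := congrArg (Equiv.swap a b) h2
    simpa [Equiv.Perm.mul_apply] using this
  · simp [Equiv.Perm.mul_apply, (h _).2]

theorem exists_fpf {n : ℕ} (he : Even n) : ∃ s : Equiv.Perm (Fin n), FpfInv s := by
  refine ⟨Fin.revPerm, fun i => ⟨fun h => ?_, by simp⟩⟩
  have := congrArg Fin.val h
  simp [Fin.val_rev] at this
  obtain ⟨k, hk⟩ := he
  omega

theorem exists_fpf4 {n : ℕ} (he : Even n) (a b c d : Fin n) (hab : a ≠ b) (hac : a ≠ c)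
    (had : a ≠ d) (hbc : b ≠ c) (hbd : b ≠ d) (hcd : c ≠ d) :
    ∃ s : Equiv.Perm (Fin n), FpfInv s ∧ s a = b ∧ s c = d := by
  obtain ⟨s, hs⟩ := exists_fpf he
  obtain ⟨t, ht, hta⟩ : ∃ t : Equiv.Perm (Fin n), FpfInv t ∧ t a = b := by
    refine ⟨_, hs.conj (s a) b, ?_⟩
    simp [Equiv.Perm.mul_apply, Equiv.swap_apply_of_ne_of_ne (hs a).1.symm hab]
  have htb : t b = a := by rw [← hta]; exact (ht a).2
  refine ⟨_, ht.conj (t c) d, ?_, ?_⟩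
  · have h1 : a ≠ t c := by
      intro h; rw [← htb] at h; exact hbc (t.injective h)
    have h2 : b ≠ t c := by
      intro h; rw [← hta] at h; exact hac (t.injective h)
    simp [Equiv.Perm.mul_apply, Equiv.swap_apply_of_ne_of_ne h1 had, hta,
      Equiv.swap_apply_of_ne_of_ne h2 hbd]
  · simp [Equiv.Perm.mul_apply, Equiv.swap_apply_of_ne_of_ne (ht c).1.symm hcd]

theorem isPairing_of {n : ℕ} {s : Equiv.Perm (Fin n)} (h : FpfInv s) :
    IsPairing (Matrix.of fun i j => if s i = j then (1 : ℝ) else 0) := by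
  refine ⟨?_, ?_, ?_, ?_⟩
  · ext i j
    simp only [Matrix.transpose_apply, Matrix.of_apply]
    have : s j = i ↔ s i = j :=
      ⟨fun e => by rw [← e]; exact (h j).2, fun e => by rw [← e]; exact (h i).2⟩
    simp [this]
  · intro i; simp [(h i).1]
  · intro i j; simp only [Matrix.of_apply]; split_ifs <;> simp
  · intro i; simp

theorem innerH_perm {n : ℕ} (s : Equiv.Perm (Fin n)) (C : Matrix (Fin n) (Fin n) ℝ) :
    innerH (Matrix.of fun i j => if s i = j then (1 : ℝ) else 0) C
      = (1 / 2) * ∑ i, C i (s i) := by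
  simp [innerH]

theorem innerH_adjR {n : ℕ} (i : Fin n) (C : Matrix (Fin n) (Fin n) ℝ) (hC : hollowSym C) :
    innerH (adjR i) C = ∑ j, C i j := by
  have h : ∀ k l, adjR i k l * C k l = (if i = k then C k l else 0) + (if i = l then C k l else 0) := by
    intro k l
    have := hC.2 k
    simp only [adjR, Matrix.of_apply]
    by_cases hkl : k = l
    · subst hkl; simp [this]
    · by_cases h1 : i = k
      · subst h1; simp [hkl]
      · simp [hkl, h1]
  have e : ∀ k, C k i = C i k := fun k => hC.1.apply i k
  have h1 : ∑ k, ∑ l, (if i = k then C k l else 0) = ∑ j, C i j := by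
    rw [Finset.sum_comm]; simp
  simp only [innerH, h, Finset.sum_add_distrib, h1]
  simp [e]
  ring

theorem exchange {n : ℕ} (he : Even n) (C : Matrix (Fin n) (Fin n) ℝ) (hC : hollowSym C)
    (H : ∀ s : Equiv.Perm (Fin n), FpfInv s → ∑ i, C i (s i) = 0)
    (a b c d : Fin n) (hab : a ≠ b) (hac : a ≠ c)
    (had : a ≠ d) (hbc : b ≠ c) (hbd : b ≠ d) (hcd : c ≠ d) :
    C a b + C c d = C a c + C b d := by
  obtain ⟨s, hs, sa, sc⟩ := exists_fpf4 he a b c d hab hac had hbc hbd hcd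
  have sb : s b = a := by rw [← sa]; exact (hs a).2
  have sd : s d = c := by rw [← sc]; exact (hs c).2
  have h1 := H s hs
  have h2 := H _ (hs.conj b c)
  set t := Equiv.swap b c * s * Equiv.swap b c with ht
  have ta : t a = c := by
    simp [ht, Equiv.Perm.mul_apply, Equiv.swap_apply_of_ne_of_ne hab hac, sa]
  have tb : t b = d := by
    simp [ht, Equiv.Perm.mul_apply, Equiv.swap_apply_of_ne_of_ne hbd.symm hcd.symm, sc]
  have tc : t c = a := by
    simp [ht, Equiv.Perm.mul_apply, Equiv.swap_apply_of_ne_of_ne hab hac, sb]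
  have td : t d = b := by
    simp [ht, Equiv.Perm.mul_apply, Equiv.swap_apply_of_ne_of_ne hbd.symm hcd.symm, sd]
  have h3 : ∑ i ∈ ({a, b, c, d} : Finset (Fin n)), (C i (s i) - C i (t i))
      = ∑ i, (C i (s i) - C i (t i)) := by
    apply Finset.sum_subset (Finset.subset_univ _)
    intro x _ hx
    simp only [Finset.mem_insert, Finset.mem_singleton, not_or] at hx
    obtain ⟨xa, xb, xc, xd⟩ := hx
    have e1 : s x ≠ b := fun h => xa (s.injective (h.trans sa.symm))
    have e2 : s x ≠ c := fun h => xd (s.injective (h.trans sd.symm))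
    have : t x = s x := by
      simp [ht, Equiv.Perm.mul_apply, Equiv.swap_apply_of_ne_of_ne xb xc,
        Equiv.swap_apply_of_ne_of_ne e1 e2]
    simp [this]
  have h4 : ∑ i, (C i (s i) - C i (t i)) = 0 := by
    rw [Finset.sum_sub_distrib, h1, h2, sub_zero]
  rw [h4] at h3
  rw [Finset.sum_insert (by simp [hab, hac, had]), Finset.sum_insert (by simp [hbc, hbd]),
    Finset.sum_insert (by simp [hcd]), Finset.sum_singleton, sa, sb, sc, sd, ta, tb, tc, td] at h3
  have e1 := hC.1.apply a b
  have e2 := hC.1.apply a c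
  have e3 := hC.1.apply b d
  have e4 := hC.1.apply c d
  linarith

theorem sum_ne {n : ℕ} (a : Fin n) (f : Fin n → ℝ) :
    ∑ x ∈ Finset.univ.erase a, f x = ∑ x, f x - f a := by
  rw [← Finset.add_sum_erase _ f (Finset.mem_univ a)]; ring

theorem card_ne {n : ℕ} (a : Fin n) :
    ((Finset.univ.erase a : Finset (Fin n)).card : ℝ) = n - 1 := by
  have h := Finset.card_erase_add_one (Finset.mem_univ a)
  rw [Finset.card_univ, Fintype.card_fin] at h
  have : (((Finset.univ.erase a : Finset (Fin n)).card + 1 : ℕ) : ℝ) = n := by rw [h]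
  push_cast at this
  linarith

theorem core {n : ℕ} (hn : 4 ≤ n) (he : Even n) (C : Matrix (Fin n) (Fin n) ℝ)
    (hC : hollowSym C)
    (H : ∀ s : Equiv.Perm (Fin n), FpfInv s → ∑ i, C i (s i) = 0) (a b : Fin n) (hab : a ≠ b) :
    ((n : ℝ) - 2) * C a b = ∑ j, C a j + ∑ j, C b j := by
  have hn' : (4 : ℝ) ≤ n := by exact_mod_cast hn
  have e := hC.1.apply
  have step1 : ∀ a b c : Fin n, a ≠ b → a ≠ c → b ≠ c →
      ((n : ℝ) - 2) * (C a b - C a c) = ∑ j, C b j - ∑ j, C c j := by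
    intro a b c hab hac hbc
    have h : ∑ d ∈ ({a, b, c} : Finset (Fin n)), (C a b + C c d - C a c - C b d)
        = ∑ d, (C a b + C c d - C a c - C b d) := by
      apply Finset.sum_subset (Finset.subset_univ _)
      intro d _ hd
      simp only [Finset.mem_insert, Finset.mem_singleton, not_or] at hd
      have := exchange he C hC H a b c d hab hac (Ne.symm hd.1) hbc (Ne.symm hd.2.1)
        (Ne.symm hd.2.2)
      linarith
    rw [Finset.sum_insert (by simp [hab, hac]), Finset.sum_insert (by simp [hbc]),
      Finset.sum_singleton] at h
    simp only [Finset.sum_sub_distrib, Finset.sum_add_distrib, Finset.sum_const,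
      Finset.card_univ, Fintype.card_fin, nsmul_eq_mul] at h
    have := hC.2 b
    have := hC.2 c
    have := e a b
    have := e a c
    have := e b c
    linarith
  set T := ∑ i, ∑ j, C i j with hT
  have step2 : ∀ a b : Fin n, a ≠ b →
      ((n : ℝ) - 1) * (((n : ℝ) - 2) * C a b) = (n - 1) * (∑ j, C a j + ∑ j, C b j) - T := by
    intro a b hab
    have h : ∑ c ∈ Finset.univ.erase a, ((n : ℝ) - 2) * (C a b - C a c)
        = ∑ c ∈ Finset.univ.erase a, (∑ j, C b j - ∑ j, C c j) := by
      apply Finset.sum_congr rfl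
      intro c hc
      by_cases hbc : b = c
      · subst hbc; simp
      · exact step1 a b c hab (Ne.symm (Finset.ne_of_mem_erase hc)) hbc
    rw [← Finset.mul_sum, Finset.sum_sub_distrib, Finset.sum_sub_distrib, Finset.sum_const,
      Finset.sum_const, nsmul_eq_mul, nsmul_eq_mul, card_ne, sum_ne, sum_ne, ← hT, hC.2 a] at h
    linarith
  have hT0 : T = 0 := by
    obtain ⟨s, hs⟩ := exists_fpf he
    have h1 := H s hs
    have h2 : ∑ i, ((n : ℝ) - 1) * (((n : ℝ) - 2) * C i (s i))
        = ∑ i, ((n - 1) * (∑ j, C i j + ∑ j, C (s i) j) - T) :=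
      Finset.sum_congr rfl fun i _ => step2 i (s i) (hs i).1.symm
    have h3 : ∑ i, ∑ j, C (s i) j = T := Equiv.sum_comp s (fun i => ∑ j, C i j)
    rw [← Finset.mul_sum, ← Finset.mul_sum, h1, Finset.sum_sub_distrib, ← Finset.mul_sum,
      Finset.sum_add_distrib, h3, ← hT, Finset.sum_const, Finset.card_univ, Fintype.card_fin,
      nsmul_eq_mul] at h2
    have : ((n : ℝ) - 2) * T = 0 := by linarith
    rcases mul_eq_zero.1 this with h | h
    · linarith
    · exact h
  have h := step2 a b hab
  rw [hT0, sub_zero] at h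
  exact mul_left_cancel₀ (by linarith) h

theorem core_rev {n : ℕ} (hn : 4 ≤ n) (C : Matrix (Fin n) (Fin n) ℝ) (hC : hollowSym C)
    (H : ∀ a b : Fin n, a ≠ b → ((n : ℝ) - 2) * C a b = ∑ j, C a j + ∑ j, C b j)
    (S : Matrix (Fin n) (Fin n) ℝ) (hS : IsPairing S) : innerH S C = 0 := by
  have hn' : (4 : ℝ) ≤ n := by exact_mod_cast hn
  obtain ⟨S1, S2, -, S4⟩ := hS
  set T := ∑ i, ∑ j, C i j with hT
  have hT0 : T = 0 := by
    let a : Fin n := ⟨0, by omega⟩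
    have h : ∑ c ∈ Finset.univ.erase a, ((n : ℝ) - 2) * C a c
        = ∑ c ∈ Finset.univ.erase a, (∑ j, C a j + ∑ j, C c j) :=
      Finset.sum_congr rfl fun c hc => H a c (Ne.symm (Finset.ne_of_mem_erase hc))
    rw [← Finset.mul_sum, Finset.sum_add_distrib, Finset.sum_const, nsmul_eq_mul, card_ne,
      sum_ne, sum_ne, ← hT, hC.2 a] at h
    linarith
  have h1 : ∀ i j, ((n : ℝ) - 2) * (S i j * C i j)
      = S i j * ∑ k, C i k + S i j * ∑ k, C j k := by
    intro i j
    by_cases hij : i = j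
    · subst hij; simp [S2]
    · linear_combination S i j * H i j hij
  have h4 : ∀ j, ∑ i, S i j = 1 := fun j => by
    rw [← S4 j]; exact Finset.sum_congr rfl fun i _ => S1.apply j i
  have h2 : ((n : ℝ) - 2) * ∑ i, ∑ j, S i j * C i j = 0 := by
    simp only [Finset.mul_sum _ _ ((n : ℝ) - 2), h1, Finset.sum_add_distrib]
    rw [Finset.sum_comm (f := fun i j => S i j * ∑ k, C j k)]
    simp only [← Finset.sum_mul, S4, h4, one_mul]
    rw [← hT, hT0, add_zero]
  rcases mul_eq_zero.1 h2 with h | h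
  · linarith
  · simp [innerH, h]

theorem stmt5 (n : ℕ) (hn : 4 ≤ n) (he : Even n) (A B : Matrix (Fin n) (Fin n) ℝ)
    (hA : hollowSym A) (hB : hollowSym B) :
    (∀ S, IsPairing S → innerH S A = innerH S B) ↔
      ∀ i j : Fin n, i < j →
        A i j - (innerH (adjR i) A + innerH (adjR j) A) / ((n : ℝ) - 2)
          = B i j - (innerH (adjR i) B + innerH (adjR j) B) / ((n : ℝ) - 2) := by
  have hn' : (4 : ℝ) ≤ n := by exact_mod_cast hn
  have hC : hollowSym (A - B) :=
    ⟨hA.1.sub hB.1, fun i => by simp [hA.2 i, hB.2 i]⟩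
  have hs : ∀ S, innerH S (A - B) = innerH S A - innerH S B := by
    intro S
    simp [innerH, mul_sub, Finset.sum_sub_distrib]
  have hr : ∀ i, ∑ j, (A - B) i j = innerH (adjR i) A - innerH (adjR i) B := by
    intro i
    rw [← innerH_adjR i _ hC, hs]
  have hne : (n : ℝ) - 2 ≠ 0 := by linarith
  constructor
  · intro h i j hij
    have key := core hn he (A - B) hC (fun s hfs => by
      have h1 := hs (Matrix.of fun i j => if s i = j then (1 : ℝ) else 0)
      rw [h _ (isPairing_of hfs), innerH_perm] at h1
      linarith) i j hij.ne
    rw [hr, hr, Matrix.sub_apply] at key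
    field_simp
    linarith
  · intro h S hS
    have h1 : ∀ i j : Fin n, i < j →
        ((n : ℝ) - 2) * (A - B) i j = ∑ k, (A - B) i k + ∑ k, (A - B) j k := by
      intro i j hij
      have h2 := h i j hij
      rw [hr, hr, Matrix.sub_apply]
      field_simp at h2
      linarith
    have h3 := core_rev hn (A - B) hC (fun a b hab => by
      rcases lt_or_gt_of_ne hab with hl | hl
      · exact h1 a b hl
      · rw [← hC.1.apply a b, h1 b a hl, add_comm]) S hS
    rw [hs] at h3
    linarith
end

section
/- Let n be an even integer with n ≥ 4, let C ∈ Ω_n, and let Ĉ := C − μ_element(C)·(J_n − I_n). Then the variance of the total compatibility over all pairings satisfies σ²_sum(C,C) = (n(n−2)/(2(n−3)))·σ²_element(C,C) − (1/((n−1)(n−3)))·Σ_{k=1}^n ⟨R_k,Ĉ⟩². -/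
open Finset

noncomputable def PP (n : ℕ) : Finset (Equiv.Perm (Fin n)) :=
  Finset.univ.filter (fun σ : Equiv.Perm (Fin n) => ∀ i, σ i ≠ i ∧ σ (σ i) = i)

theorem mem_PP {n : ℕ} (σ : Equiv.Perm (Fin n)) : σ ∈ PP n ↔ ∀ i, σ i ≠ i ∧ σ (σ i) = i := by
  simp [PP]

theorem PP_conj {n : ℕ} (p : Equiv.Perm (Fin n)) (F : Equiv.Perm (Fin n) → ℝ) :
    ∑ σ ∈ PP n, F (p * σ * p⁻¹) = ∑ σ ∈ PP n, F σ := by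
  refine Finset.sum_bij' (fun σ _ => p * σ * p⁻¹) (fun σ _ => p⁻¹ * σ * p) ?_ ?_ ?_ ?_ ?_
  · intro σ hσ
    rw [mem_PP] at *
    intro i
    have := hσ (p⁻¹ i)
    refine ⟨?_, ?_⟩
    · intro h
      apply this.1
      simpa [Equiv.Perm.mul_apply, Equiv.apply_eq_iff_eq_symm_apply] using h
    · simp [Equiv.Perm.mul_apply, (hσ _).2]
  · intro σ hσ
    rw [mem_PP] at *
    intro i
    have := hσ (p i)
    refine ⟨?_, ?_⟩
    · intro h
      apply this.1
      have h2 : p (p⁻¹ (σ (p i))) = p i := congrArg p h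
      simpa using h2
    · simp [Equiv.Perm.mul_apply, (hσ _).2]
  · intro σ _; group
  · intro σ _; group
  · intro σ _; rfl

noncomputable def ff {n : ℕ} (i j : Fin n) : ℝ :=
  ∑ σ ∈ PP n, if σ i = j then 1 else 0

noncomputable def gg {n : ℕ} (i j k l : Fin n) : ℝ :=
  ∑ σ ∈ PP n, (if σ i = j then 1 else 0) * (if σ k = l then 1 else 0)

theorem conj_ind {n : ℕ} (p σ : Equiv.Perm (Fin n)) (i j : Fin n) :
    (p * σ * p⁻¹) (p i) = p j ↔ σ i = j := by
  simp [Equiv.Perm.mul_apply]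

theorem ff_conj {n : ℕ} (p : Equiv.Perm (Fin n)) (i j : Fin n) : ff (p i) (p j) = ff i j := by
  unfold ff
  rw [← PP_conj p]
  simp only [conj_ind]

theorem gg_conj {n : ℕ} (p : Equiv.Perm (Fin n)) (i j k l : Fin n) :
    gg (p i) (p j) (p k) (p l) = gg i j k l := by
  unfold gg
  rw [← PP_conj p]
  simp only [conj_ind]

theorem ff_val {n : ℕ} (i j : Fin n) (h : i ≠ j) :
    ((n : ℝ) - 1) * ff i j = ((PP n).card : ℝ) := by
  have h1 : ∑ x, ff i x = ((PP n).card : ℝ) := by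
    unfold ff
    rw [Finset.sum_comm]
    simp
  have h2 : ∀ x, ff i x = if x ∈ (Finset.univ.erase i : Finset (Fin n)) then ff i j else 0 := by
    intro x
    by_cases hx : x = i
    · subst hx
      simp only [Finset.mem_erase, ne_eq, not_true_eq_false, false_and, if_false]
      unfold ff
      refine Finset.sum_eq_zero fun σ hσ => ?_
      rw [mem_PP] at hσ
      simp [(hσ x).1]
    · simp only [Finset.mem_erase, ne_eq, hx, not_false_eq_true, Finset.mem_univ, and_self, if_true]
      have := ff_conj (Equiv.swap x j) i j
      rw [Equiv.swap_apply_right, Equiv.swap_apply_of_ne_of_ne (Ne.symm hx) h] at this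
      exact this
  rw [← h1, Finset.sum_congr rfl (fun x _ => h2 x), Finset.sum_ite_mem, Finset.univ_inter,
    Finset.sum_const, Finset.card_erase_of_mem (Finset.mem_univ _)]
  have : 1 ≤ n := i.pos
  simp [nsmul_eq_mul, Nat.cast_sub this]

theorem gg_val {n : ℕ} (i j k l : Fin n) (hij : i ≠ j) (hik : i ≠ k) (hil : i ≠ l)
    (hjk : j ≠ k) (hjl : j ≠ l) (hkl : k ≠ l) :
    ((n : ℝ) - 3) * gg i j k l = ff i j := by
  have h1 : ∑ x, gg i j k x = ff i j := by
    unfold gg ff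
    rw [Finset.sum_comm]
    simp
  have hcard : ({i, j, k} : Finset (Fin n)).card = 3 := by
    rw [Finset.card_eq_three]
    exact ⟨i, j, k, hij, hik, hjk, rfl⟩
  have h2 : ∀ x, gg i j k x = if x ∈ (({i, j, k} : Finset (Fin n))ᶜ) then gg i j k l else 0 := by
    intro x
    by_cases hx : x ∈ ({i, j, k} : Finset (Fin n))
    · simp only [Finset.mem_compl, hx, not_true_eq_false, if_false]
      unfold gg
      refine Finset.sum_eq_zero fun σ hσ => ?_
      rw [mem_PP] at hσ
      have a1 := hσ i
      have a2 := hσ j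
      have a3 := hσ k
      simp only [Finset.mem_insert, Finset.mem_singleton] at hx
      by_cases h3 : σ i = j
      · by_cases h4 : σ k = x
        · exfalso
          grind
        · simp [h4]
      · simp [h3]
    · simp only [Finset.mem_compl, hx, not_false_eq_true, if_true]
      simp only [Finset.mem_insert, Finset.mem_singleton, not_or] at hx
      have := gg_conj (Equiv.swap x l) i j k l
      rw [Equiv.swap_apply_right, Equiv.swap_apply_of_ne_of_ne (Ne.symm hx.1) hil,
        Equiv.swap_apply_of_ne_of_ne (Ne.symm hx.2.1) hjl,
        Equiv.swap_apply_of_ne_of_ne (Ne.symm hx.2.2) hkl] at this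
      exact this
  have h3 : 3 ≤ n := by
    have := Finset.card_le_univ ({i, j, k} : Finset (Fin n))
    rw [hcard] at this
    simpa using this
  rw [← h1, Finset.sum_congr rfl (fun x _ => h2 x), Finset.sum_ite_mem, Finset.univ_inter,
    Finset.sum_const, Finset.card_compl, hcard]
  simp [nsmul_eq_mul, Nat.cast_sub h3]

theorem gg_formula {n : ℕ} (hn : 4 ≤ n) (i j k l : Fin n) (hij : i ≠ j) (hkl : k ≠ l) :
    (((n : ℝ) - 1) * ((n : ℝ) - 3)) * gg i j k l = ((PP n).card : ℝ) *
      (((n : ℝ) - 2) * ((if i = k then 1 else 0) * (if j = l then 1 else 0)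
          + (if i = l then 1 else 0) * (if j = k then 1 else 0))
        + (1 - (if i = k then 1 else 0) - (if i = l then 1 else 0) - (if j = k then 1 else 0)
          - (if j = l then 1 else 0))) := by
  have hf := ff_val i j hij
  by_cases c1 : i = k
  · subst c1
    by_cases c2 : j = l
    · subst c2
      have : gg i j i j = ff i j := by
        unfold gg ff
        refine Finset.sum_congr rfl fun σ _ => ?_
        split_ifs <;> simp
      rw [this, ← hf]
      simp [hij, hij.symm]
      ring
    · have : gg i j i l = 0 := by
        unfold gg
        refine Finset.sum_eq_zero fun σ _ => ?_
        split_ifs <;> simp_all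
      rw [this]
      simp [c2, hkl, hij.symm]
  by_cases c2 : i = l
  · subst c2
    by_cases c3 : j = k
    · subst c3
      have : gg i j j i = ff i j := by
        unfold gg ff
        refine Finset.sum_congr rfl fun σ hσ => ?_
        rw [mem_PP] at hσ
        have a1 := hσ i
        have a2 := hσ j
        split_ifs <;> grind
      rw [this, ← hf]
      simp [hij, hij.symm]
      ring
    · have : gg i j k i = 0 := by
        unfold gg
        refine Finset.sum_eq_zero fun σ hσ => ?_
        rw [mem_PP] at hσ
        have a1 := hσ i
        have a2 := hσ k
        split_ifs <;> grind
      rw [this]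
      simp [c1, c3, hij.symm]
  by_cases c3 : j = k
  · subst c3
    have : gg i j j l = 0 := by
      unfold gg
      refine Finset.sum_eq_zero fun σ hσ => ?_
      rw [mem_PP] at hσ
      have a1 := hσ i
      have a2 := hσ j
      split_ifs <;> grind
    rw [this]
    simp [c1, c2, hkl]
  by_cases c4 : j = l
  · subst c4
    have : gg i j k j = 0 := by
      unfold gg
      refine Finset.sum_eq_zero fun σ hσ => ?_
      have a1 : σ i = σ k → i = k := fun h => σ.injective h
      split_ifs <;> grind
    rw [this]
    simp [c1, c2, c3]
  rw [mul_assoc, gg_val i j k l hij c1 c2 c3 c4 hkl, hf]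
  simp [c1, c2, c3, c4]

noncomputable def TT {n : ℕ} (X : Matrix (Fin n) (Fin n) ℝ) (σ : Equiv.Perm (Fin n)) : ℝ :=
  ∑ i, ∑ j, (if σ i = j then 1 else 0) * X i j

theorem sum_TT {n : ℕ} (X : Matrix (Fin n) (Fin n) ℝ) (hX : ∀ i, X i i = 0) :
    ((n : ℝ) - 1) * ∑ σ ∈ PP n, TT X σ = ((PP n).card : ℝ) * ∑ i, ∑ j, X i j := by
  have : ∑ σ ∈ PP n, TT X σ = ∑ i, ∑ j, ff i j * X i j := by
    unfold TT ff
    rw [Finset.sum_comm]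
    refine Finset.sum_congr rfl fun i _ => ?_
    rw [Finset.sum_comm]
    refine Finset.sum_congr rfl fun j _ => ?_
    rw [Finset.sum_mul]
  rw [this, Finset.mul_sum, Finset.mul_sum]
  refine Finset.sum_congr rfl fun i _ => ?_
  rw [Finset.mul_sum, Finset.mul_sum]
  refine Finset.sum_congr rfl fun j _ => ?_
  by_cases h : i = j
  · subst h; simp [hX]
  · rw [← ff_val i j h]; ring

theorem sum_TT_sq {n : ℕ} (hn : 4 ≤ n) (X : Matrix (Fin n) (Fin n) ℝ) (hX : ∀ i, X i i = 0)
    (hs : ∀ i j, X i j = X j i) (h0 : ∑ i, ∑ j, X i j = 0) :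
    (((n : ℝ) - 1) * ((n : ℝ) - 3)) * ∑ σ ∈ PP n, TT X σ ^ 2 = ((PP n).card : ℝ) *
      (2 * ((n : ℝ) - 2) * ∑ i, ∑ j, X i j ^ 2 - 4 * ∑ i, (∑ j, X i j) ^ 2) := by
  have e1 : ∑ σ ∈ PP n, TT X σ ^ 2 = ∑ i, ∑ j, ∑ k, ∑ l, gg i j k l * (X i j * X k l) := by
    have : ∀ σ, TT X σ ^ 2 = ∑ i, ∑ j, ∑ k, ∑ l,
        ((if σ i = j then 1 else 0) * (if σ k = l then 1 else 0)) * (X i j * X k l) := by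
      intro σ
      unfold TT
      rw [sq, Finset.sum_mul]
      refine Finset.sum_congr rfl fun i _ => ?_
      rw [Finset.sum_mul]
      refine Finset.sum_congr rfl fun j _ => ?_
      rw [Finset.mul_sum]
      refine Finset.sum_congr rfl fun k _ => ?_
      rw [Finset.mul_sum]
      refine Finset.sum_congr rfl fun l _ => ?_
      ring
    rw [Finset.sum_congr rfl fun σ _ => this σ]
    unfold gg
    rw [Finset.sum_comm]
    refine Finset.sum_congr rfl fun i _ => ?_
    rw [Finset.sum_comm]
    refine Finset.sum_congr rfl fun j _ => ?_
    rw [Finset.sum_comm]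
    refine Finset.sum_congr rfl fun k _ => ?_
    rw [Finset.sum_comm]
    refine Finset.sum_congr rfl fun l _ => ?_
    rw [Finset.sum_mul]
  have e2 : (((n : ℝ) - 1) * ((n : ℝ) - 3)) * ∑ i, ∑ j, ∑ k, ∑ l, gg i j k l * (X i j * X k l)
      = ((PP n).card : ℝ) * ∑ i, ∑ j, ∑ k, ∑ l, 
      (((n : ℝ) - 2) * ((if i = k then 1 else 0) * (if j = l then 1 else 0)
          + (if i = l then 1 else 0) * (if j = k then 1 else 0))
        + (1 - (if i = k then 1 else 0) - (if i = l then 1 else 0) - (if j = k then 1 else 0)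
          - (if j = l then 1 else 0))) * (X i j * X k l) := by
    simp only [Finset.mul_sum]
    refine Finset.sum_congr rfl fun i _ => ?_
    refine Finset.sum_congr rfl fun j _ => ?_
    refine Finset.sum_congr rfl fun k _ => ?_
    refine Finset.sum_congr rfl fun l _ => ?_
    by_cases hij : i = j
    · subst hij; simp [hX]
    by_cases hkl : k = l
    · subst hkl; simp [hX]
    rw [← mul_assoc, gg_formula hn i j k l hij hkl, mul_assoc]
  rw [e1, e2]
  congr 1
  have hin : ∀ i j, ∑ k, ∑ l, 
      (((n : ℝ) - 2) * ((if i = k then 1 else 0) * (if j = l then 1 else 0)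
          + (if i = l then 1 else 0) * (if j = k then 1 else 0))
        + (1 - (if i = k then 1 else 0) - (if i = l then 1 else 0) - (if j = k then 1 else 0)
          - (if j = l then 1 else 0))) * (X i j * X k l)
      = 2 * ((n : ℝ) - 2) * X i j ^ 2 - 2 * (X i j * ∑ l, X i l) - 2 * (X i j * ∑ l, X j l) := by
    intro i j
    have : ∀ k l, (((n : ℝ) - 2) * ((if i = k then 1 else 0) * (if j = l then 1 else 0)
          + (if i = l then 1 else 0) * (if j = k then 1 else 0))
        + (1 - (if i = k then 1 else 0) - (if i = l then 1 else 0) - (if j = k then 1 else 0)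
          - (if j = l then 1 else 0))) * (X i j * X k l)
        = X i j * (((n : ℝ) - 2) * (if i = k then (if j = l then X k l else 0) else 0)
          + ((n : ℝ) - 2) * (if j = k then (if i = l then X k l else 0) else 0)
          + X k l - (if i = k then X k l else 0) - (if i = l then X l k else 0)
          - (if j = k then X k l else 0) - (if j = l then X l k else 0)) := by
      intro k l
      rw [hs l k]
      split_ifs <;> ring
    simp only [this, ← Finset.mul_sum, Finset.sum_add_distrib, Finset.sum_sub_distrib, h0]
    have q1 : ∀ a : Fin n, ∑ k, ∑ l, (if a = k then X k l else 0) = ∑ l, X a l := by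
      intro a
      rw [Finset.sum_comm]
      simp
    have q2 : ∀ a b : Fin n, ∑ k, ∑ l, (if a = k then (if b = l then X k l else 0) else 0)
        = X a b := by
      intro a b
      rw [Finset.sum_comm]
      simp
    have q3 : ∀ a : Fin n, ∑ k, ∑ l, (if a = l then X l k else 0) = ∑ l, X a l := by
      intro a
      simp
    rw [q1, q1, q2, q2, q3, q3, hs j i]
    ring
  simp only [hin, Finset.sum_sub_distrib, ← Finset.mul_sum]
  have r1 : ∑ i, ∑ j, X i j * ∑ l, X i l = ∑ i, (∑ j, X i j) ^ 2 := by
    refine Finset.sum_congr rfl fun i _ => ?_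
    rw [← Finset.sum_mul, sq]
  have r2 : ∑ i, ∑ j, X i j * ∑ l, X j l = ∑ i, (∑ j, X i j) ^ 2 := by
    rw [Finset.sum_comm, ← r1]
    refine Finset.sum_congr rfl fun i _ => ?_
    refine Finset.sum_congr rfl fun j _ => ?_
    rw [hs j i]
  rw [r1, r2]
  ring

theorem half_sum {n : ℕ} (F : Fin n → Fin n → ℝ) (h0 : ∀ i, F i i = 0)
    (hs : ∀ i j, F i j = F j i) :
    ∑ i, ∑ j, F i j = 2 * ∑ i, ∑ j ∈ Finset.univ.filter (fun j => i < j), F i j := by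
  have h1 : ∀ i j, F i j = (if i < j then F i j else 0) + (if j < i then F j i else 0) := by
    intro i j
    rcases lt_trichotomy i j with h | h | h
    · simp [h, h.not_gt]
    · subst h; simp [h0]
    · simp [h, h.not_gt, hs i j]
  simp only [Finset.sum_filter]
  rw [Finset.sum_congr rfl fun i _ => Finset.sum_congr rfl fun j _ => h1 i j]
  simp only [Finset.sum_add_distrib]
  rw [Finset.sum_comm (f := fun i j => if j < i then F j i else 0)]
  ring

theorem sum_pairings {n : ℕ} (X : Matrix (Fin n) (Fin n) ℝ) (F : ℝ → ℝ) :
    ∑ S ∈ pairings n, F (innerH S X) = ∑ σ ∈ PP n, F (1 / 2 * TT X σ) := by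
  unfold pairings
  rw [Finset.sum_image]
  · rfl
  · intro σ _ τ _ h
    ext i
    have := congrFun (congrFun h i) (σ i)
    simp only [Matrix.of_apply, if_true] at this
    by_contra hne
    rw [if_neg (fun h => hne (by rw [h]))] at this
    exact one_ne_zero this

theorem card_PP {n : ℕ} (he : Even n) (hn : 1 ≤ n) :
    (PP n).card = Nat.doubleFactorial (n - 1) := by
  obtain ⟨m, hm⟩ := he
  have hm1 : 1 ≤ m := by omega
  have hPP : PP n = Finset.univ.filter
      (fun σ : Equiv.Perm (Fin n) => σ.cycleType = Multiset.replicate m 2) := by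
    ext σ
    rw [mem_PP, Finset.mem_filter]
    simp only [Finset.mem_univ, true_and]
    have hsq : σ ^ 2 = 1 ↔ ∀ i, σ (σ i) = i := by
      rw [Equiv.ext_iff]
      simp [sq]
    have hsup : σ.support.card = n ↔ ∀ i, σ i ≠ i := by
      have h1 : σ.support.card = n ↔ σ.support = Finset.univ := by
        rw [← Finset.card_eq_iff_eq_univ, Fintype.card_fin]
      rw [h1, Finset.eq_univ_iff_forall]
      simp
    rw [forall_and, ← hsq, ← hsup]
    constructor
    · rintro ⟨h1, h2⟩
      haveI : Fact (Nat.Prime 2) := ⟨Nat.prime_two⟩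
      have h3 := Equiv.Perm.pow_prime_eq_one_iff.mp h2
      have h4 := Multiset.eq_replicate.mpr ⟨rfl, h3⟩
      have h5 := σ.sum_cycleType
      rw [h4, Multiset.sum_replicate, h1, smul_eq_mul] at h5
      rw [h4]
      congr 1
      omega
    · intro h
      haveI : Fact (Nat.Prime 2) := ⟨Nat.prime_two⟩
      refine ⟨?_, ?_⟩
      · rw [← σ.sum_cycleType, h, Multiset.sum_replicate, smul_eq_mul]; omega
      · rw [Equiv.Perm.pow_prime_eq_one_iff, h]
        intro c hc
        exact Multiset.eq_of_mem_replicate hc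
  have h := Equiv.Perm.card_of_cycleType_mul_eq (Fin n) (Multiset.replicate m 2)
  rw [← hPP, if_pos ⟨by simp; omega, fun a ha => (Multiset.eq_of_mem_replicate ha).ge⟩] at h
  have hsum : (Multiset.replicate m 2).sum = n := by simp; omega
  have hfin : (Multiset.replicate m 2).toFinset = {2} := by
    rw [Multiset.toFinset_replicate, if_neg (by omega)]
  rw [hsum, hfin, Finset.prod_singleton, Multiset.count_replicate_self, Multiset.prod_replicate,
    Fintype.card_fin, Nat.sub_self, Nat.factorial_zero, one_mul, ← Nat.doubleFactorial_two_mul] at h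
  have h2 := Nat.factorial_eq_mul_doubleFactorial (n - 1)
  rw [Nat.sub_add_cancel hn, ← h, show n = 2 * m by omega, mul_comm] at h2
  rw [show n = 2 * m by omega]
  exact Nat.eq_of_mul_eq_mul_left (Nat.doubleFactorial_pos _) h2

theorem stmt14 (n : ℕ) (hn : 4 ≤ n) (he : Even n) (C : Matrix (Fin n) (Fin n) ℝ)
    (hC : hollowSym C) (Chat : Matrix (Fin n) (Fin n) ℝ)
    (hChat : Chat = C - muEl C • (Jmat n - 1)) :
    sig2Sum n C
      = ((n : ℝ) * ((n : ℝ) - 2) / (2 * ((n : ℝ) - 3))) * sig2El C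
        - (1 / (((n : ℝ) - 1) * ((n : ℝ) - 3))) * ∑ k : Fin n, innerH (adjR k) Chat ^ 2 := by
  obtain ⟨hsym, hd⟩ := hC
  have hs : ∀ i j, C i j = C j i := fun i j => (hsym.apply i j).symm
  have hnR : (4 : ℝ) ≤ n := by exact_mod_cast hn
  have n0 : (n : ℝ) ≠ 0 := by linarith
  have n1 : (n : ℝ) - 1 ≠ 0 := by linarith
  have n3 : (n : ℝ) - 3 ≠ 0 := by linarith
  set m := muEl C with hm
  have hX : ∀ i j, Chat i j = C i j - m * (1 - if i = j then 1 else 0) := by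
    intro i j
    rw [hChat]
    simp [Jmat, Matrix.one_apply]
  have hXd : ∀ i, Chat i i = 0 := by intro i; simp [hX, hd]
  have hXs : ∀ i j, Chat i j = Chat j i := by
    intro i j; rw [hX, hX, hs i j]; simp only [eq_comm]
  have hmC : ∑ i, ∑ j, C i j = n * (n - 1) * m := by
    rw [half_sum C hd hs, hm, muEl, pairSum]
    field_simp
  have hX0 : ∑ i, ∑ j, Chat i j = 0 := by
    simp only [hX, Finset.sum_sub_distrib, hmC, ← Finset.mul_sum]
    simp
    ring
  have hcard := card_PP he (by omega)
  have hN : ((PP n).card : ℝ) ≠ 0 := by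
    rw [hcard]
    exact_mod_cast (Nat.doubleFactorial_pos _).ne'
  have hTT : ∀ σ ∈ PP n, TT Chat σ = TT C σ - m * n := by
    intro σ hσ
    rw [mem_PP] at hσ
    unfold TT
    simp only [ite_mul, one_mul, zero_mul, Finset.sum_ite_eq, Finset.mem_univ, if_true, hX,
      Finset.sum_sub_distrib]
    have : ∀ i, i ≠ σ i := fun i => (hσ i).1.symm
    simp [this]
    ring
  have hmu : muSum n C = 1 / 2 * (m * n) := by
    have h1 := sum_TT C hd
    unfold muSum
    rw [sum_pairings C (fun x => x), ← hcard, ← Finset.mul_sum]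
    rw [hmC] at h1
    have h2 : ∑ σ ∈ PP n, TT C σ = (PP n).card * (n * m) := by
      apply mul_left_cancel₀ n1
      rw [h1]; ring
    rw [h2]
    field_simp
  have hsig : sig2Sum n C = 1 / (PP n).card * (1 / 4 * ∑ σ ∈ PP n, TT Chat σ ^ 2) := by
    unfold sig2Sum
    rw [sum_pairings C (fun x => (x - muSum n C) ^ 2), ← hcard, hmu,
      Finset.mul_sum (PP n) (fun σ => TT Chat σ ^ 2) (1 / 4)]
    congr 1
    refine Finset.sum_congr rfl fun σ hσ => ?_
    rw [hTT σ hσ]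
    ring
  have hel : sig2El C = 1 / (n * (n - 1)) * ∑ i, ∑ j, Chat i j ^ 2 := by
    unfold sig2El
    rw [half_sum (fun i j => Chat i j ^ 2) (by intro i; simp [hXd])
      (by intro i j; simp only [hXs i j])]
    have : ∑ i : Fin n, ∑ j ∈ Finset.univ.filter (fun j => i < j), (C i j - muEl C) ^ 2
        = ∑ i : Fin n, ∑ j ∈ Finset.univ.filter (fun j => i < j), Chat i j ^ 2 := by
      refine Finset.sum_congr rfl fun i _ => ?_
      refine Finset.sum_congr rfl fun j hj => ?_
      have hlt : i < j := by simpa using hj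
      rw [hX, if_neg hlt.ne, ← hm]
      ring
    rw [this]
    ring
  have hR : ∀ k, innerH (adjR k) Chat = ∑ j, Chat k j := by
    intro k
    unfold innerH adjR
    have : ∀ i j, (Matrix.of (fun a b => if a ≠ b ∧ (k = a ∨ k = b) then (1 : ℝ) else 0)) i j
        * Chat i j = (if k = i then Chat i j else 0) + (if k = j then Chat j i else 0) := by
      intro i j
      rw [hXs j i]
      simp only [Matrix.of_apply]
      by_cases hij : i = j
      · subst hij; simp [hXd]
      · by_cases h1 : k = i
        · subst h1; simp [hij]
        · simp [h1, hij]
    simp only [this, Finset.sum_add_distrib]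
    rw [Finset.sum_comm]
    simp
    ring
  have key := sum_TT_sq hn Chat hXd hXs hX0
  simp only [hR]
  rw [hsig, hel]
  have key2 : ∑ σ ∈ PP n, TT Chat σ ^ 2 = ((PP n).card : ℝ) *
      (2 * ((n : ℝ) - 2) * ∑ i, ∑ j, Chat i j ^ 2 - 4 * ∑ i, (∑ j, Chat i j) ^ 2)
      / (((n : ℝ) - 1) * ((n : ℝ) - 3)) := by
    rw [eq_div_iff (mul_ne_zero n1 n3), ← key]; ring
  rw [key2]
  field_simp
  ring
end

section
/- Let n be an even integer with n ≥ 4 and let C ∈ Ω_n. Define C̃ ∈ Ω_n by C̃_{i,j} = 0 if 1 ∈ {i,j}, and C̃_{i,j} = C_{i,j} − C_{1,i} − C_{1,j} + (2/(n−2))·Σ_{k=2}^n C_{1,k} otherwise (for i ≠ j; C̃_{i,i} = 0). Then C̃ ~ C, i.e., ⟨S,C̃⟩ = ⟨S,C⟩ for every pairing matrix S ∈ 𝕊(n). -/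
open Finset

theorem stmt15 (n : ℕ) (hn : 4 ≤ n) (he : Even n) (C : Matrix (Fin n) (Fin n) ℝ)
    (hC : hollowSym C) (Ct : Matrix (Fin n) (Fin n) ℝ)
    (hCt : Ct = Matrix.of fun i j =>
      if i = (⟨0, by omega⟩ : Fin n) ∨ j = (⟨0, by omega⟩ : Fin n) ∨ i = j then 0
      else C i j - C ⟨0, by omega⟩ i - C ⟨0, by omega⟩ j
        + (2 / ((n : ℝ) - 2)) *
          ∑ k ∈ Finset.univ.filter (fun k => k ≠ (⟨0, by omega⟩ : Fin n)), C ⟨0, by omega⟩ k) :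
    ∀ S, IsPairing S → innerH S Ct = innerH S C := by
  intro S hS
  obtain ⟨hs, hd, -, hr⟩ := hS
  obtain ⟨hCs, hCd⟩ := hC
  have hcol : ∀ j, ∑ i, S i j = 1 := by
    intro j
    rw [← hr j]
    exact Finset.sum_congr rfl fun i _ => hs.apply j i
  have hn2 : (n : ℝ) - 2 ≠ 0 := by
    have : (4 : ℝ) ≤ n := by exact_mod_cast hn
    linarith
  generalize hz : (⟨0, by omega⟩ : Fin n) = z at hCt
  have hT : ∑ k ∈ Finset.univ.filter (fun k => k ≠ z), C z k = ∑ k, C z k := by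
    rw [Finset.sum_filter]
    refine Finset.sum_congr rfl fun k _ => ?_
    by_cases h : k = z
    · subst h; simp [hCd]
    · simp [h]
  rw [hT] at hCt
  generalize hc : 2 / ((n : ℝ) - 2) * ∑ k, C z k = c at hCt
  have hc2 : ((n : ℝ) - 2) * c = 2 * ∑ k, C z k := by
    rw [← hc]; field_simp
  have key : ∀ i j, S i j * Ct i j = S i j * C i j - S i j * C z i - S i j * C z j + S i j * c
      - (if i = z then S i j * c else 0) - (if j = z then S i j * c else 0) := by
    intro i j
    rw [hCt]
    simp only [Matrix.of_apply]
    by_cases hij : i = j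
    · subst hij; simp [hd]
    · by_cases hi : i = z
      · subst hi
        have : j ≠ i := fun h => hij h.symm
        simp [this, hCd]
      · by_cases hj : j = z
        · subst hj
          simp [hi, hCd, hCs.apply i j]
        · simp [hi, hj, hij]; ring
  have h1 : ∑ i, ∑ j, S i j * C z i = ∑ k, C z k := by
    simp [← Finset.sum_mul, hr]
  have h2 : ∑ i, ∑ j, S i j * C z j = ∑ k, C z k := by
    rw [Finset.sum_comm]; simp [← Finset.sum_mul, hcol]
  have h3 : ∑ i, ∑ j, S i j * c = n * c := by
    simp [← Finset.sum_mul, hr]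
  have h4 : ∑ i, ∑ j, (if i = z then S i j * c else 0) = c := by
    rw [Finset.sum_comm]; simp [← Finset.sum_mul, hr]
  have h5 : ∑ i, ∑ j, (if j = z then S i j * c else 0) = c := by
    simp [← Finset.sum_mul, hcol]
  unfold innerH
  simp only [key, Finset.sum_sub_distrib, Finset.sum_add_distrib, h1, h2, h3, h4, h5]
  linarith
end
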